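/- Let Φ be a shift-invariant interaction on X = 𝒜^(ℤ^d): for each finite Λ ⊂ ℤ^d a continuous function Φ_Λ : X → ℝ such that Φ_Λ(x) = Φ_Λ(y) whenever x|_Λ = y|_Λ, and Φ_{Λ+n}(x) = Φ_Λ(σ^n x) for all finite Λ, all n ∈ ℤ^d and all x ∈ X. Assume absolute summability: Σ_{Λ finite, 0 ∈ Λ} ‖Φ_Λ‖_∞ < ∞. Then φ(x) = Σ_{Λ finite, 0 ∈ Λ} Φ_Λ(x)/|Λ| defines a continuous function φ : X → ℝ, and φ does not have a freezing phase transition at any β_c ∈ ℝ. -/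

import Mathlib

open MeasureTheory Filter Topology
open scoped ENNReal Classical

namespace Freezing

/-- The configuration space `X = 𝒜^(ℤ^d)`. -/
abbrev Cfg (d : ℕ) (A : Type) : Type := (Fin d → ℤ) → A

section Defs

variable {d : ℕ} {A : Type} [Fintype A] [TopologicalSpace A] [DiscreteTopology A]
  [MeasurableSpace A] [BorelSpace A]

/-- The shift action: `(σ^n x)_m = x_{n+m}`. -/
def shift (n : Fin d → ℤ) (x : Cfg d A) : Cfg d A := fun m => x (n + m)

/-- Shift-invariance of a measure. -/
def Invariant (μ : Measure (Cfg d A)) : Prop :=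
  ∀ n : Fin d → ℤ, Measure.map (shift n) μ = μ

/-- Cylinder set `[w]` for a pattern `w` on `E_n = ([0,n-1] ∩ ℤ)^d`. -/
def cylE (n : ℕ) (w : (Fin d → Fin n) → A) : Set (Cfg d A) :=
  { x | ∀ m : Fin d → Fin n, x (fun i => ((m i : ℕ) : ℤ)) = w m }

/-- Measure-theoretic entropy `h(μ) = inf_{n ≥ 1} n^{-d} Σ_w (-μ[w] log μ[w])`. -/
noncomputable def entropy (μ : Measure (Cfg d A)) : ℝ :=
  ⨅ n : {n : ℕ // 1 ≤ n},
    ((n.1 : ℝ) ^ d)⁻¹ *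
      ∑ w : (Fin d → Fin n.1) → A, Real.negMulLog (μ (cylE n.1 w)).toReal

/-- Pressure `p_φ(β) = sup { h(μ) + β ∫ φ dμ }` over shift-invariant probability measures. -/
noncomputable def pressure (φ : Cfg d A → ℝ) (β : ℝ) : ℝ :=
  sSup { r | ∃ μ : Measure (Cfg d A), IsProbabilityMeasure μ ∧ Invariant μ ∧
    r = entropy μ + β * ∫ x, φ x ∂μ }

/-- The set of equilibrium states of `βφ`. -/
def ES (φ : Cfg d A → ℝ) (β : ℝ) : Set (Measure (Cfg d A)) :=
  { μ | IsProbabilityMeasure μ ∧ Invariant μ ∧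
      entropy μ + β * ∫ x, φ x ∂μ = pressure φ β }

/-- `φ` has a freezing phase transition at `βc`. -/
def FreezingPT (φ : Cfg d A → ℝ) (βc : ℝ) : Prop :=
  (∀ β β' : ℝ, βc < β → βc < β' → ES φ β = ES φ β') ∧
  (∀ β β' : ℝ, β < βc → βc < β' → ES φ β ≠ ES φ β')

/-- `s_φ = sup { ∫ φ dμ }` over shift-invariant probability measures. -/
noncomputable def sPhi (φ : Cfg d A → ℝ) : ℝ :=
  sSup { r | ∃ μ : Measure (Cfg d A), IsProbabilityMeasure μ ∧ Invariant μ ∧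
    r = ∫ x, φ x ∂μ }

/-- The set of maximizing measures of `φ`. -/
def MM (φ : Cfg d A → ℝ) : Set (Measure (Cfg d A)) :=
  { μ | IsProbabilityMeasure μ ∧ Invariant μ ∧ (∫ x, φ x ∂μ) = sPhi φ }

/-- `h_φ = sup { h(η) : η ∈ MM(φ) }`. -/
noncomputable def hPhi (φ : Cfg d A → ℝ) : ℝ :=
  sSup { r | ∃ μ ∈ MM φ, r = entropy μ }

/-- The zero-temperature accumulation points of `φ`. -/
def ZTA (φ : Cfg d A → ℝ) : Set (Measure (Cfg d A)) :=
  { μ | IsProbabilityMeasure μ ∧ Invariant μ ∧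
      ∃ (β : ℕ → ℝ) (μs : ℕ → Measure (Cfg d A)),
        Tendsto β atTop atTop ∧ (∀ k, μs k ∈ ES φ (β k)) ∧
        ∀ f : Cfg d A → ℝ, Continuous f →
          Tendsto (fun k => ∫ x, f x ∂(μs k)) atTop (𝓝 (∫ x, f x ∂μ)) }

/-- A subshift: nonempty, closed, invariant under every shift. -/
def IsSubshift (X₀ : Set (Cfg d A)) : Prop :=
  X₀.Nonempty ∧ IsClosed X₀ ∧ ∀ n : Fin d → ℤ, ∀ x ∈ X₀, shift n x ∈ X₀

/-- The language `L_{E_n}(X₀)`: patterns on `E_n` appearing at the origin of points of `X₀`. -/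
def langE (X₀ : Set (Cfg d A)) (n : ℕ) : Set ((Fin d → Fin n) → A) :=
  { w | ∃ x ∈ X₀, ∀ m : Fin d → Fin n, x (fun i => ((m i : ℕ) : ℤ)) = w m }

/-- Topological entropy `h_top(X₀) = inf_{n ≥ 1} n^{-d} log |L_{E_n}(X₀)|`. -/
noncomputable def topEnt (X₀ : Set (Cfg d A)) : ℝ :=
  ⨅ n : {n : ℕ // 1 ≤ n}, ((n.1 : ℝ) ^ d)⁻¹ * Real.log ((langE X₀ n.1).ncard)

/-- A measure of maximal entropy on the subshift `X₀`. -/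
def IsMME (X₀ : Set (Cfg d A)) (μ : Measure (Cfg d A)) : Prop :=
  IsProbabilityMeasure μ ∧ Invariant μ ∧ μ X₀ = 1 ∧ entropy μ = topEnt X₀

/-- Ergodicity: invariant Borel sets have measure `0` or `1`. -/
def ErgodicInv (μ : Measure (Cfg d A)) : Prop :=
  ∀ s : Set (Cfg d A), MeasurableSet s → (∀ n : Fin d → ℤ, shift n ⁻¹' s = s) →
    μ s = 0 ∨ μ s = 1

/-- The `n`-th variation `var_n φ`, over pairs agreeing on `B_n = ([-n,n] ∩ ℤ)^d`. -/
noncomputable def varPot (φ : Cfg d A → ℝ) (n : ℕ) : ℝ :=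
  sSup { r | ∃ x y : Cfg d A,
    (∀ m : Fin d → ℤ, (∀ i, |m i| ≤ (n : ℤ)) → x m = y m) ∧ r = |φ x - φ y| }

/-- Sup-norm `‖m‖_∞` of a site `m ∈ ℤ^d`. -/
def supNorm (m : Fin d → ℤ) : ℕ := Finset.univ.sup fun i => (m i).natAbs

/-- The metric `dist(x,y) = 2^{-min{‖n‖_∞ : x_n ≠ y_n}}`. -/
noncomputable def cfgDist (x y : Cfg d A) : ℝ :=
  if x = y then 0
  else (2 : ℝ) ^
    (-((sInf { k : ℕ | ∃ m : Fin d → ℤ, supNorm m = k ∧ x m ≠ y m } : ℕ) : ℤ))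

/-- Distance from a point to a subshift. -/
noncomputable def distToSub (X₀ : Set (Cfg d A)) (x : Cfg d A) : ℝ :=
  sInf { r | ∃ y ∈ X₀, r = cfgDist x y }

end Defs


section Interaction

variable {d : ℕ} {A : Type} [Fintype A] [TopologicalSpace A] [DiscreteTopology A]
  [MeasurableSpace A] [BorelSpace A]

/-- The potential associated to an interaction: `φ = Σ_{Λ ∋ 0} Φ_Λ / |Λ|`. -/
noncomputable def potentialOfInteraction (Φ : Finset (Fin d → ℤ) → Cfg d A → ℝ)
    (x : Cfg d A) : ℝ :=
  ∑' Λ : {Λ : Finset (Fin d → ℤ) // (0 : Fin d → ℤ) ∈ Λ}, Φ Λ.1 x / (Λ.1.card : ℝ)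

end Interaction

/-!
By the variational principle, the pressure is the limit of the pressures of the tori `(ℤ/N)^d`, so
strict convexity of the pressure follows from strict midpoint convexity of the finite-volume
pressures with a gap proportional to the volume (Griffiths and Ruelle). If `∫ φ` takes two different
values on invariant measures, then on a large box there are two patterns whose energies differ
whatever the configuration outside of the box. Absolute summability makes the energies of many such
boxes on a sparse grid nearly additive, uniformly in the configuration of the remaining sites;
conditioning on these sites, each box therefore contributes a fixed amount to the convexity gap.
An equilibrium state common to `β ≠ β'` would make the pressure affine between `β` and `β'`, so
distinct inverse temperatures have disjoint nonempty sets of equilibrium states. If `∫ φ` is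
constant on invariant measures, the equilibrium states do not depend on `β`. Neither behaviour is
compatible with freezing.
-/

section FiniteThermodynamics

variable {Ω Ω' : Type*} [Fintype Ω] [Fintype Ω'] {E E' : Ω → ℝ}

/-- The logarithm of the partition function of a finite system with energy `E`, where `E` enters
the Boltzmann factor with a positive sign. -/
noncomputable def logPartition (E : Ω → ℝ) (β : ℝ) : ℝ :=
  Real.log (∑ ω, Real.exp (β * E ω))

/-- The Gibbs distribution of a finite system, the maximizer in the Gibbs variational principle. -/
noncomputable def gibbsWeight (E : Ω → ℝ) (β : ℝ) (ω : Ω) : ℝ :=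
  Real.exp (β * E ω) / ∑ ω', Real.exp (β * E ω')

lemma sum_exp_pos [Nonempty Ω] (E : Ω → ℝ) : 0 < ∑ ω, Real.exp (E ω) :=
  Finset.sum_pos (fun _ _ => Real.exp_pos _) Finset.univ_nonempty

lemma exp_logPartition [Nonempty Ω] (E : Ω → ℝ) (β : ℝ) :
    Real.exp (logPartition E β) = ∑ ω, Real.exp (β * E ω) :=
  Real.exp_log (sum_exp_pos _)

lemma gibbsWeight_pos (E : Ω → ℝ) (β : ℝ) (ω : Ω) : 0 < gibbsWeight E β ω :=
  have : Nonempty Ω := ⟨ω⟩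
  div_pos (Real.exp_pos _) (sum_exp_pos _)

lemma sum_gibbsWeight [Nonempty Ω] (E : Ω → ℝ) (β : ℝ) : ∑ ω, gibbsWeight E β ω = 1 := by
  simp only [gibbsWeight]
  rw [← Finset.sum_div, div_self (sum_exp_pos _).ne']

lemma log_gibbsWeight (E : Ω → ℝ) (β : ℝ) (ω : Ω) :
    Real.log (gibbsWeight E β ω) = β * E ω - logPartition E β := by
  have : Nonempty Ω := ⟨ω⟩
  rw [gibbsWeight, Real.log_div (Real.exp_pos _).ne' (sum_exp_pos _).ne', Real.log_exp,
    logPartition]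

lemma add_negMulLog_le (E : Ω → ℝ) (β : ℝ) (ω : Ω) {p : ℝ} (hp : 0 ≤ p) :
    p * (β * E ω) + p.negMulLog ≤ p * logPartition E β + gibbsWeight E β ω - p := by
  have hg := gibbsWeight_pos E β ω
  rcases hp.eq_or_lt with rfl | hp
  · simpa using hg.le
  have hlog := mul_le_mul_of_nonneg_left (Real.log_le_sub_one_of_pos (div_pos hg hp)) hp.le
  rw [Real.log_div hg.ne' hp.ne', log_gibbsWeight, mul_sub_one, mul_div_cancel₀ _ hp.ne'] at hlog
  rw [Real.negMulLog]
  linarith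

lemma energy_add_entropy_le_logPartition (E : Ω → ℝ) (β : ℝ) {p : Ω → ℝ} (hp : ∀ ω, 0 ≤ p ω)
    (hsum : ∑ ω, p ω = 1) :
    β * ∑ ω, p ω * E ω + ∑ ω, (p ω).negMulLog ≤ logPartition E β := by
  have : Nonempty Ω := by
    by_contra h
    simp [not_nonempty_iff.1 h] at hsum
  calc β * ∑ ω, p ω * E ω + ∑ ω, (p ω).negMulLog
      = ∑ ω, (p ω * (β * E ω) + (p ω).negMulLog) := by
        rw [Finset.mul_sum, ← Finset.sum_add_distrib]
        exact Finset.sum_congr rfl fun ω _ => by ring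
    _ ≤ ∑ ω, (p ω * logPartition E β + gibbsWeight E β ω - p ω) :=
        Finset.sum_le_sum fun ω _ => add_negMulLog_le E β ω (hp ω)
    _ = logPartition E β := by
        rw [Finset.sum_sub_distrib, Finset.sum_add_distrib, ← Finset.sum_mul, hsum,
          sum_gibbsWeight]
        ring

lemma energy_add_entropy_gibbsWeight [Nonempty Ω] (E : Ω → ℝ) (β : ℝ) :
    β * ∑ ω, gibbsWeight E β ω * E ω + ∑ ω, (gibbsWeight E β ω).negMulLog =
      logPartition E β := by
  rw [Finset.mul_sum, ← Finset.sum_add_distrib]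
  calc ∑ ω, (β * (gibbsWeight E β ω * E ω) + (gibbsWeight E β ω).negMulLog)
      = ∑ ω, gibbsWeight E β ω * logPartition E β :=
        Finset.sum_congr rfl fun ω _ => by rw [Real.negMulLog, log_gibbsWeight]; ring
    _ = logPartition E β := by rw [← Finset.sum_mul, sum_gibbsWeight, one_mul]

lemma logPartition_le_of_le [Nonempty Ω] {β β' c : ℝ} (h : ∀ ω, β * E ω ≤ β' * E' ω + c) :
    logPartition E β ≤ logPartition E' β' + c := by
  rw [← Real.exp_le_exp, Real.exp_add, exp_logPartition, exp_logPartition, Finset.sum_mul]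
  exact Finset.sum_le_sum fun ω _ => (Real.exp_le_exp.2 (h ω)).trans_eq (Real.exp_add _ _)

lemma logPartition_le_add_mul_abs [Nonempty Ω] {η : ℝ} (h : ∀ ω, |E ω - E' ω| ≤ η) (β : ℝ) :
    logPartition E β ≤ logPartition E' β + |β| * η := by
  refine logPartition_le_of_le fun ω => ?_
  have := (le_abs_self _).trans_eq (abs_mul β (E ω - E' ω))
  linarith [mul_le_mul_of_nonneg_left (h ω) (abs_nonneg β)]

lemma abs_logPartition_sub_le [Nonempty Ω] {η : ℝ} (h : ∀ ω, |E ω - E' ω| ≤ η) (β : ℝ) :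
    |logPartition E β - logPartition E' β| ≤ |β| * η := by
  rw [abs_sub_le_iff]
  constructor
  · linarith [logPartition_le_add_mul_abs h β]
  · linarith [logPartition_le_add_mul_abs (fun ω => (abs_sub_comm _ _).trans_le (h ω)) β]

lemma abs_logPartition_le [Nonempty Ω] {B : ℝ} (h : ∀ ω, |E ω| ≤ B) (β : ℝ) :
    |logPartition E β| ≤ Real.log (Fintype.card Ω) + |β| * B := by
  have hzero : logPartition (0 : Ω → ℝ) β = Real.log (Fintype.card Ω) := by simp [logPartition]
  have hsub := abs_logPartition_sub_le (E' := 0) (by simpa using h) β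
  have hcard : 0 ≤ Real.log (Fintype.card Ω) := Real.log_natCast_nonneg _
  rw [hzero] at hsub
  rw [abs_le] at hsub ⊢
  constructor <;> linarith [hsub.1, hsub.2]

lemma logPartition_comp_equiv (e : Ω' ≃ Ω) (E : Ω → ℝ) (β : ℝ) :
    logPartition (E ∘ e) β = logPartition E β :=
  congrArg Real.log (e.sum_comp fun ω => Real.exp (β * E ω))

lemma logPartition_add_const [Nonempty Ω] (E : Ω → ℝ) (c β : ℝ) :
    logPartition (fun ω => E ω + c) β = logPartition E β + β * c := by
  rw [← Real.exp_eq_exp, Real.exp_add, exp_logPartition, exp_logPartition, Finset.sum_mul]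
  exact Finset.sum_congr rfl fun ω _ => by rw [mul_add, Real.exp_add]

lemma logPartition_comp_fst [Nonempty Ω] [Nonempty Ω'] (E : Ω → ℝ) (β : ℝ) :
    logPartition (fun ω : Ω × Ω' => E ω.1) β =
      logPartition E β + Real.log (Fintype.card Ω') := by
  rw [logPartition, Fintype.sum_prod_type, logPartition,
    ← Real.log_mul (sum_exp_pos _).ne' (by simp), Finset.sum_mul]
  simp [mul_comm]

lemma logPartition_sum {I V : Type*} [Fintype I] [DecidableEq I] [Fintype V] [Nonempty V]
    (h : I → V → ℝ) (β : ℝ) :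
    logPartition (fun ω : I → V => ∑ i, h i (ω i)) β = ∑ i, logPartition (h i) β := by
  simp only [logPartition]
  rw [← Real.log_prod fun i _ => (sum_exp_pos _).ne', Fintype.prod_sum]
  exact congrArg Real.log (Finset.sum_congr rfl fun ω _ => by rw [Finset.mul_sum, Real.exp_sum])

/-- The second difference of `logPartition E` at `b` with step `s`: a quantitative form of midpoint
convexity in the inverse temperature. -/
noncomputable def convexityGap (E : Ω → ℝ) (b s : ℝ) : ℝ :=
  logPartition E (b - s) + logPartition E (b + s) - 2 * logPartition E b

lemma exp_convexityGap_mul [Nonempty Ω] (E : Ω → ℝ) (b s : ℝ) :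
    Real.exp (convexityGap E b s) * (∑ ω, Real.exp (b * E ω)) ^ 2 =
      (∑ ω, Real.exp ((b - s) * E ω)) * ∑ ω, Real.exp ((b + s) * E ω) := by
  rw [← exp_logPartition, ← exp_logPartition, ← exp_logPartition, ← Real.exp_nat_mul,
    ← Real.exp_add, ← Real.exp_add, convexityGap]
  congr 1
  push_cast
  ring

lemma convexityGap_comp_equiv (e : Ω' ≃ Ω) (E : Ω → ℝ) (b s : ℝ) :
    convexityGap (E ∘ e) b s = convexityGap E b s := by
  simp only [convexityGap, logPartition_comp_equiv]

lemma convexityGap_add_const [Nonempty Ω] (E : Ω → ℝ) (c b s : ℝ) :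
    convexityGap (fun ω => E ω + c) b s = convexityGap E b s := by
  simp only [convexityGap, logPartition_add_const]
  ring

lemma convexityGap_comp_fst [Nonempty Ω] [Nonempty Ω'] (E : Ω → ℝ) (b s : ℝ) :
    convexityGap (fun ω : Ω × Ω' => E ω.1) b s = convexityGap E b s := by
  simp only [convexityGap, logPartition_comp_fst]
  ring

lemma convexityGap_sum {I V : Type*} [Fintype I] [DecidableEq I] [Fintype V] [Nonempty V]
    (h : I → V → ℝ) (b s : ℝ) :
    convexityGap (fun ω : I → V => ∑ i, h i (ω i)) b s = ∑ i, convexityGap (h i) b s := by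
  simp only [convexityGap, logPartition_sum]
  rw [Finset.sum_sub_distrib, Finset.sum_add_distrib, Finset.mul_sum]

lemma convexityGap_le_of_abs_sub_le [Nonempty Ω] {η : ℝ} (h : ∀ ω, |E ω - E' ω| ≤ η) (b s : ℝ) :
    convexityGap E' b s - (|b - s| + |b + s| + 2 * |b|) * η ≤ convexityGap E b s := by
  have hminus := abs_le.1 (abs_logPartition_sub_le h (b - s))
  have hplus := abs_le.1 (abs_logPartition_sub_le h (b + s))
  have hmid := abs_le.1 (abs_logPartition_sub_le h b)
  simp only [convexityGap]
  linarith [hminus.1, hplus.1, hmid.2]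

/-- Cauchy–Schwarz: the partition functions of the fibres satisfy
`e^c Z_y(b)² ≤ Z_y(b-s) Z_y(b+s)`, and this is stable under summation over `y`. -/
lemma le_convexityGap_of_forall_fibre [Nonempty Ω] [Nonempty Ω'] {E : Ω × Ω' → ℝ} {b s c : ℝ}
    (h : ∀ y, c ≤ convexityGap (fun ω => E (y, ω)) b s) : c ≤ convexityGap E b s := by
  let Z (β : ℝ) (y : Ω) : ℝ := ∑ ω, Real.exp (β * E (y, ω))
  have hZpos : ∀ β y, 0 < Z β y := fun β y => sum_exp_pos _
  have hZsum : ∀ β, ∑ y, Z β y = ∑ ω, Real.exp (β * E ω) := fun β =>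
    (Fintype.sum_prod_type fun ω => Real.exp (β * E ω)).symm
  have hexp : Real.exp (c / 2) ^ 2 = Real.exp c := by
    rw [← Real.exp_nat_mul, Nat.cast_ofNat, mul_div_cancel₀ c two_ne_zero]
  have hfibre : ∀ y, (Real.exp (c / 2) * Z b y) ^ 2 ≤ Z (b - s) y * Z (b + s) y := fun y => by
    rw [mul_pow, hexp]
    exact (mul_le_mul_of_nonneg_right (Real.exp_le_exp.2 (h y)) (sq_nonneg _)).trans_eq
      (exp_convexityGap_mul (fun ω => E (y, ω)) b s)
  have hsum := Finset.sum_sq_le_sum_mul_sum_of_sq_le_mul Finset.univ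
    (fun y _ => (hZpos (b - s) y).le) (fun y _ => (hZpos (b + s) y).le) (fun y _ => hfibre y)
  rw [← Finset.mul_sum, mul_pow, hexp, hZsum, hZsum, hZsum, ← exp_convexityGap_mul] at hsum
  exact Real.exp_le_exp.1 (le_of_mul_le_mul_right hsum (pow_pos (sum_exp_pos _) 2))

lemma sum_exp_mul_cosh_sub_one (E : Ω → ℝ) (b s : ℝ) :
    ∑ x, ∑ y, Real.exp (b * (E x + E y)) * (Real.cosh (s * (E x - E y)) - 1) =
      (∑ ω, Real.exp ((b - s) * E ω)) * (∑ ω, Real.exp ((b + s) * E ω)) -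
        (∑ ω, Real.exp (b * E ω)) ^ 2 := by
  have hterm : ∀ x y, Real.exp (b * (E x + E y)) * (Real.cosh (s * (E x - E y)) - 1) =
      (Real.exp ((b + s) * E x) * Real.exp ((b - s) * E y) +
        Real.exp ((b - s) * E x) * Real.exp ((b + s) * E y)) / 2 -
        Real.exp (b * E x) * Real.exp (b * E y) := fun x y => by
    rw [Real.cosh_eq, mul_sub_one, mul_div_assoc', mul_add, ← Real.exp_add, ← Real.exp_add,
      ← Real.exp_add, ← Real.exp_add, ← Real.exp_add]
    ring_nf
  simp only [hterm, Finset.sum_sub_distrib, ← Finset.sum_div, Finset.sum_add_distrib,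
    ← Finset.sum_mul_sum]
  ring

lemma exp_mul_cosh_sub_one_le (E : Ω → ℝ) (b s : ℝ) {δ : ℝ} (hδ : 0 ≤ δ) {u v : Ω}
    (huv : δ ≤ |E u - E v|) :
    Real.exp (b * (E u + E v)) * (Real.cosh (s * δ) - 1) ≤
      (∑ ω, Real.exp ((b - s) * E ω)) * (∑ ω, Real.exp ((b + s) * E ω)) -
        (∑ ω, Real.exp (b * E ω)) ^ 2 := by
  have hnonneg : ∀ x y,
      0 ≤ Real.exp (b * (E x + E y)) * (Real.cosh (s * (E x - E y)) - 1) := fun x y =>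
    mul_nonneg (Real.exp_pos _).le (sub_nonneg.2 (Real.one_le_cosh _))
  have hcosh : Real.cosh (s * δ) ≤ Real.cosh (s * (E u - E v)) := by
    rw [Real.cosh_le_cosh, abs_mul, abs_mul, abs_of_nonneg hδ]
    gcongr
  rw [← sum_exp_mul_cosh_sub_one]
  calc Real.exp (b * (E u + E v)) * (Real.cosh (s * δ) - 1)
      ≤ Real.exp (b * (E u + E v)) * (Real.cosh (s * (E u - E v)) - 1) := by gcongr
    _ ≤ ∑ y, Real.exp (b * (E u + E y)) * (Real.cosh (s * (E u - E y)) - 1) :=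
        Finset.single_le_sum
          (f := fun y => Real.exp (b * (E u + E y)) * (Real.cosh (s * (E u - E y)) - 1))
          (fun y _ => hnonneg u y) (Finset.mem_univ v)
    _ ≤ _ := Finset.single_le_sum
          (f := fun x => ∑ y, Real.exp (b * (E x + E y)) * (Real.cosh (s * (E x - E y)) - 1))
          (fun x _ => Finset.sum_nonneg fun y _ => hnonneg x y) (Finset.mem_univ u)

lemma sum_exp_sq_le {b C : ℝ} (hE : ∀ x y, |E x - E y| ≤ C) (u v : Ω) :
    (∑ ω, Real.exp (b * E ω)) ^ 2 ≤
      Fintype.card Ω ^ 2 * Real.exp (2 * |b| * C) * Real.exp (b * (E u + E v)) := by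
  have hle : ∀ v, ∑ ω, Real.exp (b * E ω) ≤
      Fintype.card Ω * Real.exp (|b| * C + b * E v) := fun v => by
    rw [← nsmul_eq_mul, ← Finset.card_univ]
    refine Finset.sum_le_card_nsmul _ _ _ fun ω _ => Real.exp_le_exp.2 ?_
    have := (le_abs_self _).trans_eq (abs_mul b (E ω - E v))
    linarith [mul_le_mul_of_nonneg_left (hE ω v) (abs_nonneg b)]
  calc (∑ ω, Real.exp (b * E ω)) ^ 2
      ≤ (Fintype.card Ω * Real.exp (|b| * C + b * E u)) *
          (Fintype.card Ω * Real.exp (|b| * C + b * E v)) := by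
        rw [sq]
        exact mul_le_mul (hle u) (hle v) (Finset.sum_nonneg fun _ _ => (Real.exp_pos _).le)
          (by positivity)
    _ = Fintype.card Ω ^ 2 * Real.exp (2 * |b| * C) * Real.exp (b * (E u + E v)) := by
        rw [mul_mul_mul_comm, ← Real.exp_add, ← sq, mul_assoc, ← Real.exp_add]
        ring_nf

lemma exists_pos_le_convexityGap (V : Type*) [Fintype V] (b C : ℝ) {δ s : ℝ} (hδ : 0 < δ)
    (hs : s ≠ 0) :
    ∃ c, 0 < c ∧ ∀ (h : V → ℝ) (u v : V), (∀ x y, |h x - h y| ≤ C) → δ ≤ |h u - h v| →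
      c ≤ convexityGap h b s := by
  rcases isEmpty_or_nonempty V with hV | hV
  · exact ⟨1, one_pos, fun h u => (hV.false u).elim⟩
  have hcosh : 0 < Real.cosh (s * δ) - 1 :=
    sub_pos.2 (Real.one_lt_cosh.2 (mul_ne_zero hs hδ.ne'))
  let D : ℝ := Fintype.card V ^ 2 * Real.exp (2 * |b| * C)
  have hDpos : 0 < D := by positivity
  set κ := (Real.cosh (s * δ) - 1) / D with hκ
  have hκpos : 0 < κ := div_pos hcosh hDpos
  refine ⟨Real.log (1 + κ), Real.log_pos (by linarith), fun h u v hC huv => ?_⟩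
  have hκle : κ * (∑ ω, Real.exp (b * h ω)) ^ 2 ≤
      Real.exp (b * (h u + h v)) * (Real.cosh (s * δ) - 1) := by
    calc κ * (∑ ω, Real.exp (b * h ω)) ^ 2 ≤ κ * (D * Real.exp (b * (h u + h v))) := by
          gcongr
          exact sum_exp_sq_le hC u v
      _ = Real.exp (b * (h u + h v)) * (Real.cosh (s * δ) - 1) := by
          rw [hκ]
          field_simp
  have hprod := exp_mul_cosh_sub_one_le h b s hδ.le huv
  rw [← exp_convexityGap_mul] at hprod
  rw [Real.log_le_iff_le_exp (by positivity)]
  refine le_of_mul_le_mul_right (a := (∑ ω, Real.exp (b * h ω)) ^ 2) ?_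
    (pow_pos (sum_exp_pos _) 2)
  linarith

section NearProduct

variable {I V : Type*} [Fintype I] [DecidableEq I]

/-- Telescoping: change the coordinates from `a` to `ω` one at a time. -/
lemma abs_sub_sum_update_le (H : (I → V) → ℝ) (a : I → V) {ε : ℝ}
    (hcross : ∀ i u ω, |(H (Function.update ω i u) - H (Function.update ω i (a i))) -
      (H (Function.update a i u) - H a)| ≤ ε) (ω : I → V) :
    |H ω - H a - ∑ i, (H (Function.update a i (ω i)) - H a)| ≤ Fintype.card I * ε := by
  suffices key : ∀ J : Finset I,
      |H (J.piecewise ω a) - H a - ∑ i ∈ J, (H (Function.update a i (ω i)) - H a)| ≤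
        J.card * ε by
    simpa using key Finset.univ
  intro J
  induction J using Finset.induction_on with
  | empty => simp
  | insert i J hi ih =>
    have hstep := hcross i (ω i) (J.piecewise ω a)
    rw [← Finset.piecewise_insert,
      Function.update_eq_self_iff.2 (Finset.piecewise_eq_of_notMem J ω a hi).symm] at hstep
    rw [Finset.sum_insert hi, Finset.card_insert_of_notMem hi, Nat.cast_add_one]
    rw [abs_le] at *
    constructor <;> linarith [hstep.1, hstep.2, ih.1, ih.2]

lemma mul_le_convexityGap_of_nearProduct [Fintype V] (H : (I → V) → ℝ) (a : I → V)
    {b s c ε : ℝ}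
    (hcross : ∀ i u ω, |(H (Function.update ω i u) - H (Function.update ω i (a i))) -
      (H (Function.update a i u) - H a)| ≤ ε)
    (hgap : ∀ i, c ≤ convexityGap (fun u => H (Function.update a i u)) b s) :
    Fintype.card I * (c - (|b - s| + |b + s| + 2 * |b|) * ε) ≤ convexityGap H b s := by
  rcases isEmpty_or_nonempty I with hI | ⟨⟨i₀⟩⟩
  · have hH : H = fun ω => (fun _ : I → V => (0 : ℝ)) ω + H a := by
      funext ω
      rw [Subsingleton.elim ω a, zero_add]
    rw [hH, convexityGap_add_const]
    simp [convexityGap, logPartition]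
  have : Nonempty V := ⟨a i₀⟩
  have hsum : convexityGap (fun ω : I → V => ∑ i, (H (Function.update a i (ω i)) - H a) + H a) b s =
      ∑ i, convexityGap (fun u => H (Function.update a i u)) b s := by
    rw [convexityGap_add_const]
    refine (convexityGap_sum (fun i u => H (Function.update a i u) - H a) b s).trans ?_
    simp only [sub_eq_add_neg, convexityGap_add_const]
  have hclose := convexityGap_le_of_abs_sub_le (E := H)
    (E' := fun ω => ∑ i, (H (Function.update a i (ω i)) - H a) + H a)
    (fun ω => by simpa only [sub_sub, add_comm] using abs_sub_sum_update_le H a hcross ω) b s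
  have hcard : Fintype.card I * c ≤ ∑ i, convexityGap (fun u => H (Function.update a i u)) b s := by
    rw [← nsmul_eq_mul, ← Finset.card_univ]
    exact Finset.card_nsmul_le_sum _ _ _ fun i _ => hgap i
  rw [hsum] at hclose
  linarith

end NearProduct

end FiniteThermodynamics

section InjectiveSubsystem

variable {J T A : Type*} {g : J → T}

/-- Resampling the sites `g j` of a configuration, keeping track of the erased values. -/
noncomputable def swapOnRange (hg : g.Injective) : (T → A) × (J → A) ≃ (T → A) × (J → A) :=
  Function.Involutive.toPerm (fun p => (Function.extend g p.2 p.1, p.1 ∘ g)) fun p => by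
    refine Prod.ext (funext fun t => ?_) (Function.extend_comp hg _ _)
    by_cases ht : ∃ j, g j = t
    · obtain ⟨j, rfl⟩ := ht
      exact hg.extend_apply _ _ j
    · simp only [Function.extend_apply' _ _ _ ht]

lemma le_convexityGap_of_forall_extend [Fintype J] [DecidableEq J] [Fintype T] [DecidableEq T]
    [Fintype A] [Nonempty A] (hg : g.Injective) {E : (T → A) → ℝ} {b s c : ℝ}
    (h : ∀ η : T → A, c ≤ convexityGap (fun ω : J → A => E (Function.extend g ω η)) b s) :
    c ≤ convexityGap E b s := by
  rw [← convexityGap_comp_fst (Ω' := J → A), ← convexityGap_comp_equiv (swapOnRange hg)]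
  exact le_convexityGap_of_forall_fibre h

lemma sum_prod_comp_equiv {I F : Type*} [Fintype I] [Fintype F] [DecidableEq F]
    [Fintype T] [DecidableEq T] [Fintype A] (e : I × F ≃ T) (q : (F → A) → ℝ) :
    ∑ w : T → A, ∏ i, q (fun f => w (e (i, f))) = (∑ v, q v) ^ Fintype.card I := by
  rw [← ((Equiv.curry I F A).symm.trans (e.arrowCongr (Equiv.refl A))).sum_comp]
  simp [Equiv.arrowCongr, ← Fintype.prod_sum fun (_ : I) v => q v]

end InjectiveSubsystem

section Torus

variable {d : ℕ}

/-- The discrete torus `(ℤ/N)^d`. -/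
abbrev Torus (d N : ℕ) : Type := Fin d → ZMod N

/-- The reduction `ℤ^d → (ℤ/N)^d`. -/
def toTorus (N : ℕ) : (Fin d → ℤ) →+ Torus d N :=
  (Int.castAddHom (ZMod N)).compLeft (Fin d)

/-- The site of `ℤ^d` labelled by an element of the index set of `E_n`. -/
def siteOf {n : ℕ} (m : Fin d → Fin n) : Fin d → ℤ := fun i => ((m i : ℕ) : ℤ)

/-- The corner of the block of index `j`, when blocks are placed on the grid `L ℤ^d`. -/
def blockCorner (L : ℕ) {M : ℕ} (j : Fin d → Fin M) : Torus d (L * M) :=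
  toTorus (L * M) ((L : ℤ) • siteOf j)

/-- The site at offset `p.2` in the block of index `p.1`, each block being a translate of `E_k`. -/
def blockSite (L : ℕ) {M k : ℕ} (p : (Fin d → Fin M) × (Fin d → Fin k)) : Torus d (L * M) :=
  blockCorner L p.1 + toTorus (L * M) (siteOf p.2)

/-- The restriction of a configuration to `E_n`, so that `cylE n w = pattern n ⁻¹' {w}`. -/
def pattern {A : Type} (n : ℕ) (x : Cfg d A) : (Fin d → Fin n) → A := fun m => x (siteOf m)

/-- The periodic configuration that reads off a torus configuration, starting from `t`. -/
def unroll {A : Type} {N : ℕ} (w : Torus d N → A) (t : Torus d N) : Cfg d A :=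
  fun m => w (t + toTorus N m)

/-- The energy of a torus configuration: the sum of `f` over all of its periodic translates. -/
noncomputable def torusEnergy {A : Type} {N : ℕ} [NeZero N] (f : Cfg d A → ℝ) (w : Torus d N → A) :
    ℝ :=
  ∑ t, f (unroll w t)

lemma toTorus_apply (N : ℕ) (m : Fin d → ℤ) (i : Fin d) : toTorus N m i = (m i : ZMod N) := rfl

lemma siteOf_injective {n : ℕ} : Function.Injective (siteOf (d := d) (n := n)) := fun _ _ h =>
  funext fun i => Fin.ext (Int.ofNat_inj.1 (congrFun h i))

lemma abs_siteOf_sub_siteOf_lt {n : ℕ} (m m' : Fin d → Fin n) (i : Fin d) :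
    |siteOf m i - siteOf m' i| < n := by
  rw [siteOf, siteOf, abs_lt]
  omega

lemma card_torus (d N : ℕ) [NeZero N] : Fintype.card (Torus d N) = N ^ d := by simp

lemma toTorus_inj_of_abs_sub_lt {N : ℕ} {m m' : Fin d → ℤ} (hlt : ∀ i, |m i - m' i| < N)
    (h : toTorus N m = toTorus N m') : m = m' := by
  funext i
  have hdvd : (N : ℤ) ∣ m i - m' i := by
    rw [← ZMod.intCast_zmod_eq_zero_iff_dvd, Int.cast_sub, sub_eq_zero]
    exact congrFun h i
  exact sub_eq_zero.1 (Int.eq_zero_of_abs_lt_dvd hdvd (hlt i))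

lemma blockCorner_add_inj {L M : ℕ} {j j' : Fin d → Fin M} {m m' : Fin d → ℤ}
    (hlt : ∀ i, |m i - m' i| < L)
    (h : blockCorner L j + toTorus (L * M) m = blockCorner L j' + toTorus (L * M) m') :
    j = j' ∧ m = m' := by
  simp only [blockCorner, ← map_add] at h
  have hdvd : ∀ i, (L * M : ℤ) ∣ L * (siteOf j i - siteOf j' i) + (m i - m' i) := fun i => by
    have hi := congrFun h i
    simp only [toTorus_apply, Pi.add_apply, Pi.smul_apply, smul_eq_mul] at hi
    rw [← sub_eq_zero, ← Int.cast_sub, ZMod.intCast_zmod_eq_zero_iff_dvd] at hi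
    convert hi using 1
    · push_cast
      rfl
    · ring
  have hm : ∀ i, m i - m' i = 0 := fun i =>
    Int.eq_zero_of_abs_lt_dvd ((Int.dvd_add_right (dvd_mul_right _ _)).1
      ((dvd_mul_right _ _).trans (hdvd i))) (hlt i)
  refine ⟨siteOf_injective (funext fun i => ?_), funext fun i => sub_eq_zero.1 (hm i)⟩
  have hL : (L : ℤ) ≠ 0 := ((abs_nonneg _).trans_lt (hlt i)).ne'
  have hj := hdvd i
  rw [hm i, add_zero, mul_dvd_mul_iff_left hL] at hj
  exact sub_eq_zero.1 (Int.eq_zero_of_abs_lt_dvd hj (abs_siteOf_sub_siteOf_lt j j' i))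

lemma toTorus_siteOf_injective {k N : ℕ} (hkN : k ≤ N) :
    Function.Injective fun m : Fin d → Fin k => toTorus N (siteOf m) := fun m m' h =>
  siteOf_injective (toTorus_inj_of_abs_sub_lt
    (fun i => (abs_siteOf_sub_siteOf_lt m m' i).trans_le (by exact_mod_cast hkN)) h)

lemma blockSite_injective {k L M : ℕ} (hkL : k ≤ L) :
    Function.Injective (blockSite (d := d) (k := k) L (M := M)) := fun _ _ h =>
  have hinj := blockCorner_add_inj
    (fun i => (abs_siteOf_sub_siteOf_lt _ _ i).trans_le (by exact_mod_cast hkL)) h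
  Prod.ext hinj.1 (siteOf_injective hinj.2)

/-- The sites of `E_N` as coordinates on the torus. -/
noncomputable def siteEquiv (d N : ℕ) [NeZero N] : (Fin d → Fin N) ≃ Torus d N :=
  Equiv.ofBijective _ ((Fintype.bijective_iff_injective_and_card _).2
    ⟨toTorus_siteOf_injective le_rfl, by simp⟩)

/-- The partition of the torus of side `n * M` into the `M ^ d` translates of `E_n` by `n ℤ^d`. -/
noncomputable def blockEquiv (d n M : ℕ) [NeZero n] [NeZero M] :
    (Fin d → Fin M) × (Fin d → Fin n) ≃ Torus d (n * M) :=
  Equiv.ofBijective _ ((Fintype.bijective_iff_injective_and_card _).2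
    ⟨blockSite_injective le_rfl, by simp [mul_pow, mul_comm]⟩)

variable {A : Type}

lemma cylE_eq_preimage_pattern (n : ℕ) (w : (Fin d → Fin n) → A) : cylE n w = pattern n ⁻¹' {w} :=
  Set.ext fun _ => funext_iff.symm

lemma shift_unroll {N : ℕ} (n : Fin d → ℤ) (w : Torus d N → A) (t : Torus d N) :
    shift n (unroll w t) = unroll w (t + toTorus N n) := by
  funext m
  simp only [shift, unroll, map_add, add_assoc]

lemma torusEnergy_comp_shift {N : ℕ} [NeZero N] (f : Cfg d A → ℝ) (n : Fin d → ℤ)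
    (w : Torus d N → A) : torusEnergy (fun x => f (shift n x)) w = torusEnergy f w := by
  simp only [torusEnergy, shift_unroll]
  exact Equiv.sum_comp (Equiv.addRight (toTorus N n)) fun t => f (unroll w t)

lemma torusEnergy_const_mul {N : ℕ} [NeZero N] (c : ℝ) (f : Cfg d A → ℝ) (w : Torus d N → A) :
    torusEnergy (fun x => c * f x) w = c * torusEnergy f w :=
  (Finset.mul_sum _ _ _).symm

lemma abs_torusEnergy_le {N : ℕ} [NeZero N] {f : Cfg d A → ℝ} {B : ℝ} (hB : ∀ x, |f x| ≤ B)
    (w : Torus d N → A) : |torusEnergy f w| ≤ (N : ℝ) ^ d * B := by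
  calc |torusEnergy f w| ≤ ∑ t, |f (unroll w t)| := Finset.abs_sum_le_sum_abs _ _
    _ ≤ Fintype.card (Torus d N) • B := Finset.sum_le_card_nsmul _ _ _ fun t _ => hB _
    _ = (N : ℝ) ^ d * B := by rw [card_torus, nsmul_eq_mul, Nat.cast_pow]

lemma pattern_unroll_siteEquiv_symm {N : ℕ} [NeZero N] (v : (Fin d → Fin N) → A) :
    pattern N (unroll (v ∘ (siteEquiv d N).symm) 0) = v := by
  funext m
  have : toTorus N (siteOf m) = siteEquiv d N m := rfl
  simp [pattern, unroll, this]

lemma torusEnergy_comp_pattern_eq_sum (n M : ℕ) [NeZero n] [NeZero M]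
    (G : ((Fin d → Fin n) → A) → ℝ) (w : Torus d (n * M) → A) :
    torusEnergy (fun x => G (pattern n x)) w =
      ∑ m : Fin d → Fin n, ∑ j : Fin d → Fin M,
        G fun f => w (toTorus (n * M) (siteOf m) + blockEquiv d n M (j, f)) := by
  rw [torusEnergy, ← (blockEquiv d n M).sum_comp, Fintype.sum_prod_type_right]
  refine Finset.sum_congr rfl fun m _ => Finset.sum_congr rfl fun j _ => congrArg G ?_
  funext f
  refine congrArg w ?_
  exact (add_right_comm _ _ _).trans (add_comm _ _)

lemma sum_exp_blockSum_log_eq_one [Fintype A] (n M : ℕ) [NeZero n] [NeZero M]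
    {q : ((Fin d → Fin n) → A) → ℝ} (hq : ∀ v, 0 < q v) (hsum : ∑ v, q v = 1)
    (s : Torus d (n * M)) :
    ∑ w : Torus d (n * M) → A, Real.exp (∑ j : Fin d → Fin M,
      Real.log (q fun f => w (s + blockEquiv d n M (j, f)))) = 1 := by
  have htranslate := ((Equiv.addLeft s).arrowCongr (Equiv.refl A)).symm.sum_comp
    fun w : Torus d (n * M) → A => ∏ j : Fin d → Fin M, q fun f => w (blockEquiv d n M (j, f))
  simp only [Real.exp_sum, Real.exp_log (hq _)]
  exact htranslate.trans ((sum_prod_comp_equiv _ q).trans (by rw [hsum, one_pow]))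

/-- The energy is the average over `m` of `n ^ d` block-product energies, each of which is
normalized; conclude by Jensen's inequality. -/
lemma logPartition_torusEnergy_log_pattern_nonpos [Fintype A] {n N : ℕ} [NeZero N] (hnN : n ∣ N)
    {q : ((Fin d → Fin n) → A) → ℝ} (hq : ∀ v, 0 < q v) (hsum : ∑ v, q v = 1) :
    logPartition (torusEnergy (N := N) fun x => ((n : ℝ) ^ d)⁻¹ * Real.log (q (pattern n x))) 1
      ≤ 0 := by
  obtain ⟨M, rfl⟩ := hnN
  have : NeZero n := ⟨left_ne_zero_of_mul (NeZero.ne (n * M))⟩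
  have : NeZero M := ⟨right_ne_zero_of_mul (NeZero.ne (n * M))⟩
  have hweight : ∑ _m : Fin d → Fin n, ((n : ℝ) ^ d)⁻¹ = 1 := by
    simp [NeZero.ne n]
  refine Real.log_nonpos (Finset.sum_nonneg fun _ _ => (Real.exp_pos _).le) ?_
  calc ∑ w : Torus d (n * M) → A, Real.exp (1 *
        torusEnergy (fun x => ((n : ℝ) ^ d)⁻¹ * Real.log (q (pattern n x))) w)
      ≤ ∑ w : Torus d (n * M) → A, ∑ m : Fin d → Fin n, ((n : ℝ) ^ d)⁻¹ •
          Real.exp (∑ j : Fin d → Fin M, Real.log (q fun f =>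
            w (toTorus (n * M) (siteOf m) + blockEquiv d n M (j, f)))) := by
        refine Finset.sum_le_sum fun w _ => ?_
        rw [one_mul, torusEnergy_const_mul,
          torusEnergy_comp_pattern_eq_sum n M (fun v => Real.log (q v)), Finset.mul_sum]
        exact convexOn_exp.map_sum_le (fun _ _ => by positivity) hweight fun _ _ => Set.mem_univ _
    _ = 1 := by
        rw [Finset.sum_comm, ← hweight]
        refine Finset.sum_congr rfl fun m _ => ?_
        rw [← Finset.smul_sum, sum_exp_blockSum_log_eq_one n M hq hsum, smul_eq_mul, mul_one]

/-- The pressure of a potential on the torus of side `N`, per site. -/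
noncomputable def torusPressure [Fintype A] (N : ℕ) [NeZero N] (f : Cfg d A → ℝ) (β : ℝ) : ℝ :=
  ((N : ℝ) ^ d)⁻¹ * logPartition (torusEnergy (N := N) f) β

lemma abs_torusPressure_le [Fintype A] [Nonempty A] (N : ℕ) [NeZero N] {f : Cfg d A → ℝ} {B : ℝ}
    (hB : ∀ x, |f x| ≤ B) (β : ℝ) :
    |torusPressure N f β| ≤ Real.log (Fintype.card A) + |β| * B := by
  have hN : (0 : ℝ) < N := Nat.cast_pos.2 (NeZero.pos N)
  have hle := abs_logPartition_le (abs_torusEnergy_le (N := N) hB) β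
  rw [Fintype.card_fun, card_torus, Nat.cast_pow, Real.log_pow, Nat.cast_pow] at hle
  rw [torusPressure, abs_mul, abs_of_pos (by positivity), inv_mul_le_iff₀ (by positivity)]
  linarith

end Torus

section Boxes

/-- The sites of `ℤ^d` with all coordinates in `[a, b)`. -/
noncomputable def box (d : ℕ) (a b : ℤ) : Finset (Fin d → ℤ) :=
  Fintype.piFinset fun _ => Finset.Ico a b

/-- The sites within distance `R` of the boundary of the cube `E_k`, on either side of it. -/
noncomputable def collar (d R k : ℕ) : Finset (Fin d → ℤ) :=
  box d (-R) (k + R) \ box d R (k - R)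

variable {d : ℕ}

lemma mem_box {a b : ℤ} {m : Fin d → ℤ} : m ∈ box d a b ↔ ∀ i, a ≤ m i ∧ m i < b := by
  simp [box]

lemma card_box (d : ℕ) (a b : ℤ) : (box d a b).card = (b - a).toNat ^ d := by
  simp [box]

lemma abs_le_supNorm (m : Fin d → ℤ) (i : Fin d) : |m i| ≤ supNorm m := by
  rw [Int.abs_eq_natAbs]
  exact_mod_cast Finset.le_sup (f := fun i => (m i).natAbs) (Finset.mem_univ i)

lemma card_collar {R k : ℕ} (hRk : 2 * R ≤ k) :
    ((collar d R k).card : ℝ) = (k + 2 * R : ℝ) ^ d - (k - 2 * R : ℝ) ^ d := by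
  have hsub : box d R (k - R) ⊆ box d (-R) (k + R) := fun m hm => by
    rw [mem_box] at *
    exact fun i => ⟨by have := hm i; omega, by have := hm i; omega⟩
  have houter : (k + R - -R : ℤ).toNat = k + 2 * R := by omega
  have hinner : (k - R - R : ℤ).toNat = k - 2 * R := by omega
  rw [collar, Finset.card_sdiff_of_subset hsub, Nat.cast_sub (Finset.card_le_card hsub), card_box,
    card_box, houter, hinner]
  push_cast [hRk]
  rfl

lemma eventually_card_collar_le (d R : ℕ) {ε : ℝ} (hε : 0 < ε) :
    ∀ᶠ k : ℕ in atTop, ((collar d R k).card : ℝ) ≤ ε * (k : ℝ) ^ d := by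
  have hratio : Tendsto (fun k : ℕ => (2 * R : ℝ) / k) atTop (𝓝 0) :=
    tendsto_const_div_atTop_nhds_zero_nat _
  have hlim : Tendsto (fun k : ℕ => (1 + (2 * R : ℝ) / k) ^ d - (1 - (2 * R : ℝ) / k) ^ d)
      atTop (𝓝 0) := by
    simpa using ((hratio.const_add 1).pow d).sub ((hratio.const_sub 1).pow d)
  filter_upwards [hlim.eventually_lt_const hε, eventually_ge_atTop (2 * R), eventually_gt_atTop 0]
    with k hk hRk hpos
  have hk0 : (0 : ℝ) < k := Nat.cast_pos.2 hpos
  calc ((collar d R k).card : ℝ)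
      = ((1 + (2 * R : ℝ) / k) ^ d - (1 - (2 * R : ℝ) / k) ^ d) * (k : ℝ) ^ d := by
        rw [card_collar hRk, sub_mul, ← mul_pow, ← mul_pow, one_add_mul, one_sub_mul,
          div_mul_cancel₀ _ hk0.ne']
    _ ≤ ε * (k : ℝ) ^ d := by gcongr

end Boxes

section ContinuousPotential

variable {d : ℕ} {A : Type}

/-- The sum of `f` over the translates of a configuration by the sites of `E_k`. -/
noncomputable def boxSum (f : Cfg d A → ℝ) (k : ℕ) (x : Cfg d A) : ℝ :=
  ∑ m : Fin d → Fin k, f (shift (siteOf m) x)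

lemma torusEnergy_eq_boxSum {N : ℕ} [NeZero N] (f : Cfg d A → ℝ) (w : Torus d N → A) :
    torusEnergy f w = boxSum f N (unroll w 0) := by
  simp only [boxSum, shift_unroll, zero_add]
  exact ((siteEquiv d N).sum_comp fun t => f (unroll w t)).symm

lemma eq_of_pattern_eq_of_mem_box {k : ℕ} {x y : Cfg d A} (hxy : pattern k x = pattern k y)
    {m : Fin d → ℤ} (hm : m ∈ box d 0 k) : x m = y m := by
  rw [mem_box] at hm
  have hsite : siteOf (fun i => ⟨(m i).toNat, by have := hm i; omega⟩ : Fin d → Fin k) = m :=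
    funext fun i => Int.toNat_of_nonneg (hm i).1
  rw [← hsite]
  exact congrFun hxy _

lemma abs_apply_shift_sub_le_of_notMem_collar {f : Cfg d A → ℝ} {η : ℝ} {R k : ℕ}
    (hR : ∀ x y : Cfg d A, (∀ m, supNorm m ≤ R → x m = y m) → |f x - f y| ≤ η) {x y : Cfg d A}
    (hxy : pattern k x = pattern k y) {m : Fin d → Fin k} (hm : siteOf m ∉ collar d R k) :
    |f (shift (siteOf m) x) - f (shift (siteOf m) y)| ≤ η := by
  refine hR _ _ fun p hp => eq_of_pattern_eq_of_mem_box hxy (mem_box.2 fun i => ?_)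
  simp only [collar, Finset.mem_sdiff, mem_box, not_and, not_not] at hm
  have hin := hm (fun i => by simp only [siteOf]; omega) i
  have := abs_le.1 ((abs_le_supNorm p i).trans (Nat.cast_le.2 hp))
  simp only [Pi.add_apply]
  omega

variable [TopologicalSpace A]

lemma continuous_shift (n : Fin d → ℤ) : Continuous (shift (A := A) n) := by
  unfold shift
  fun_prop

lemma continuous_pattern (n : ℕ) : Continuous (pattern (d := d) (A := A) n) := by
  unfold pattern
  fun_prop

lemma continuous_boxSum {f : Cfg d A → ℝ} (hf : Continuous f) (k : ℕ) :
    Continuous (boxSum f k) :=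
  continuous_finsetSum _ fun m _ => hf.comp (continuous_shift (siteOf m))

lemma exists_forall_abs_le [Finite A] {f : Cfg d A → ℝ} (hf : Continuous f) :
    ∃ B, 0 ≤ B ∧ ∀ x, |f x| ≤ B :=
  ⟨‖ContinuousMap.mk f hf‖, norm_nonneg _, ContinuousMap.norm_coe_le_norm ⟨f, hf⟩⟩

variable [DiscreteTopology A]

lemma continuous_comp_pattern (n : ℕ) (G : ((Fin d → Fin n) → A) → ℝ) :
    Continuous fun x : Cfg d A => G (pattern n x) :=
  (continuous_of_discreteTopology (f := G)).comp (continuous_pattern n)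

variable [Finite A] {f : Cfg d A → ℝ}

lemma exists_radius_abs_sub_le (hf : Continuous f) {ε : ℝ} (hε : 0 < ε) :
    ∃ R : ℕ, ∀ x y : Cfg d A, (∀ m, supNorm m ≤ R → x m = y m) → |f x - f y| ≤ ε := by
  by_contra! h
  choose x y hagree hfar using h
  obtain ⟨x₀, -, hx⟩ := isCompact_univ.ultrafilter_le_nhds ((hyperfilter ℕ).map x) (by simp)
  obtain ⟨y₀, -, hy⟩ := isCompact_univ.ultrafilter_le_nhds ((hyperfilter ℕ).map y) (by simp)
  replace hx : Tendsto x (hyperfilter ℕ) (𝓝 x₀) := hx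
  replace hy : Tendsto y (hyperfilter ℕ) (𝓝 y₀) := hy
  obtain rfl : x₀ = y₀ := funext fun m =>
    tendsto_nhds_unique_of_eventuallyEq (hx.apply_nhds m) (hy.apply_nhds m)
      (Eventually.mono (Nat.hyperfilter_le_atTop (eventually_ge_atTop (supNorm m)))
        fun R hR => hagree R m hR)
  have hlim := (((hf.tendsto x₀).comp hx).sub ((hf.tendsto x₀).comp hy)).abs
  rw [sub_self, abs_zero] at hlim
  exact hε.not_ge (ge_of_tendsto' hlim fun R => (hfar R).le)

/-- Sites at distance more than `R` from the boundary of `E_k` contribute little by continuity, and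
the others are a negligible fraction. -/
lemma eventually_abs_boxSum_sub_le (hf : Continuous f) {ε : ℝ} (hε : 0 < ε) :
    ∀ᶠ k : ℕ in atTop, ∀ x y, pattern k x = pattern k y →
      |boxSum f k x - boxSum f k y| ≤ ε * (k : ℝ) ^ d := by
  obtain ⟨B, hB0, hB⟩ := exists_forall_abs_le hf
  obtain ⟨R, hR⟩ := exists_radius_abs_sub_le hf (half_pos hε)
  filter_upwards [eventually_card_collar_le d R (ε := ε / 2 / (2 * B + 1)) (by positivity)]
    with k hk x y hxy
  have hsite : ∀ m : Fin d → Fin k, |f (shift (siteOf m) x) - f (shift (siteOf m) y)| ≤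
      ε / 2 + if siteOf m ∈ collar d R k then 2 * B else 0 := fun m => by
    split_ifs with hm
    · have := abs_sub (f (shift (siteOf m) x)) (f (shift (siteOf m) y))
      linarith [hB (shift (siteOf m) x), hB (shift (siteOf m) y)]
    · rw [add_zero]
      exact abs_apply_shift_sub_le_of_notMem_collar hR hxy hm
  have hcard : ((Finset.univ.filter fun m : Fin d → Fin k => siteOf m ∈ collar d R k).card : ℝ) ≤
      ε / 2 / (2 * B + 1) * (k : ℝ) ^ d :=
    (Nat.cast_le.2 (Finset.card_le_card_of_injOn siteOf (fun m hm => (Finset.mem_filter.1 hm).2)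
      siteOf_injective.injOn)).trans hk
  calc |boxSum f k x - boxSum f k y|
      ≤ ∑ m : Fin d → Fin k, |f (shift (siteOf m) x) - f (shift (siteOf m) y)| := by
        rw [boxSum, boxSum, ← Finset.sum_sub_distrib]
        exact Finset.abs_sum_le_sum_abs _ _
    _ ≤ ∑ m : Fin d → Fin k, (ε / 2 + if siteOf m ∈ collar d R k then 2 * B else 0) :=
        Finset.sum_le_sum fun m _ => hsite m
    _ ≤ ε * (k : ℝ) ^ d := by
        rw [Finset.sum_add_distrib, ← Finset.sum_filter, Finset.sum_const, Finset.sum_const]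
        simp only [nsmul_eq_mul, Finset.card_univ, Fintype.card_fun, Fintype.card_fin,
          Nat.cast_pow]
        have hle : ε / 2 / (2 * B + 1) * (k : ℝ) ^ d * (2 * B) ≤ ε / 2 * (k : ℝ) ^ d := by
          rw [div_mul_eq_mul_div, div_mul_eq_mul_div, div_le_iff₀ (by positivity)]
          gcongr
          linarith
        have := mul_le_mul_of_nonneg_right hcard (mul_nonneg zero_le_two hB0)
        linarith

end ContinuousPotential

section Measures

variable {d : ℕ} {A : Type} [MeasurableSpace A]

/-- The entropy per site of the marginal of `μ` on `E_n`. -/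
noncomputable def blockEntropy [Fintype A] (n : ℕ) (μ : Measure (Cfg d A)) : ℝ :=
  ((n : ℝ) ^ d)⁻¹ * ∑ w : (Fin d → Fin n) → A, (μ.real (cylE n w)).negMulLog

lemma entropy_le_blockEntropy [Fintype A] (μ : Measure (Cfg d A)) [IsProbabilityMeasure μ] {n : ℕ}
    (hn : 1 ≤ n) : entropy μ ≤ blockEntropy n μ := by
  refine ciInf_le (f := fun n : {n : ℕ // 1 ≤ n} => blockEntropy n.1 μ) ⟨0, ?_⟩ ⟨n, hn⟩
  rintro _ ⟨n, rfl⟩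
  exact mul_nonneg (by positivity) (Finset.sum_nonneg fun w _ =>
    Real.negMulLog_nonneg measureReal_nonneg measureReal_le_one)

variable [TopologicalSpace A] [BorelSpace A]

lemma integrable_of_continuous [Finite A] {f : Cfg d A → ℝ} (hf : Continuous f)
    (μ : Measure (Cfg d A)) [IsFiniteMeasure μ] : Integrable f μ :=
  (BoundedContinuousFunction.mkOfCompact ⟨f, hf⟩).integrable μ

lemma integral_comp_shift [Finite A] {μ : Measure (Cfg d A)} (hμ : Invariant μ) {f : Cfg d A → ℝ}
    (hf : Continuous f) (n : Fin d → ℤ) : ∫ x, f (shift n x) ∂μ = ∫ x, f x ∂μ := by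
  conv_rhs => rw [← hμ n]
  rw [integral_map (continuous_shift n).measurable.aemeasurable hf.aestronglyMeasurable]

lemma integral_boxSum [Finite A] {μ : Measure (Cfg d A)} [IsFiniteMeasure μ] (hμ : Invariant μ)
    {f : Cfg d A → ℝ} (hf : Continuous f) (k : ℕ) :
    ∫ x, boxSum f k x ∂μ = (k : ℝ) ^ d * ∫ x, f x ∂μ := by
  simp only [boxSum]
  rw [integral_finsetSum _ fun m _ =>
    integrable_of_continuous (f := fun x => f (shift (siteOf m) x))
      (hf.comp (continuous_shift (siteOf m))) μ]
  simp [integral_comp_shift hμ hf]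

lemma invariant_of_integral_comp_shift [Finite A] [DiscreteTopology A] {μ : Measure (Cfg d A)}
    [IsFiniteMeasure μ]
    (h : ∀ n (g : Cfg d A → ℝ), Continuous g → ∫ x, g (shift n x) ∂μ = ∫ x, g x ∂μ) :
    Invariant μ := fun n => by
  refine ext_of_forall_integral_eq_of_IsFiniteMeasure fun g => ?_
  rw [integral_map (continuous_shift n).measurable.aemeasurable g.continuous.aestronglyMeasurable]
  exact h n g g.continuous

lemma exists_forall_tendsto_integral [Finite A] [DiscreteTopology A] (𝒰 : Ultrafilter ℕ)
    (ν : ℕ → Measure (Cfg d A)) [∀ k, IsProbabilityMeasure (ν k)] :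
    ∃ μ : Measure (Cfg d A), IsProbabilityMeasure μ ∧ ∀ g : Cfg d A → ℝ, Continuous g →
      Tendsto (fun k => ∫ x, g x ∂ν k) 𝒰 (𝓝 (∫ x, g x ∂μ)) := by
  let ν' : ℕ → ProbabilityMeasure (Cfg d A) := fun k => ⟨ν k, inferInstance⟩
  obtain ⟨μ, -, hμ⟩ := isCompact_univ.ultrafilter_le_nhds (𝒰.map ν') (by simp)
  replace hμ : Tendsto ν' 𝒰 (𝓝 μ) := hμ
  exact ⟨μ, inferInstance, fun g hg => ProbabilityMeasure.tendsto_iff_forall_integral_tendsto.1 hμ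
    (BoundedContinuousFunction.mkOfCompact ⟨g, hg⟩)⟩

variable [DiscreteTopology A]

lemma measureReal_cylE_eq_integral [Finite A] (n : ℕ) (μ : Measure (Cfg d A))
    (v : (Fin d → Fin n) → A) :
    μ.real (cylE n v) = ∫ x, (if pattern n x = v then 1 else 0 : ℝ) ∂μ := by
  rw [cylE_eq_preimage_pattern,
    ← integral_indicator_one ((continuous_pattern n).measurable (measurableSet_singleton v))]
  simp only [Set.indicator_apply, Set.mem_preimage, Set.mem_singleton_iff, Pi.one_apply]

variable [Fintype A]

lemma integral_comp_pattern (n : ℕ) (μ : Measure (Cfg d A)) [IsFiniteMeasure μ]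
    (G : ((Fin d → Fin n) → A) → ℝ) :
    ∫ x, G (pattern n x) ∂μ = ∑ v, μ.real (cylE n v) * G v := by
  have hmeas : Measurable (pattern (d := d) (A := A) n) := (continuous_pattern n).measurable
  rw [← integral_map hmeas.aemeasurable
    (continuous_of_discreteTopology (f := G)).aestronglyMeasurable, integral_fintype .of_finite]
  simp only [map_measureReal_apply hmeas (measurableSet_singleton _), smul_eq_mul,
    cylE_eq_preimage_pattern]

lemma sum_measureReal_cylE (n : ℕ) (μ : Measure (Cfg d A)) [IsProbabilityMeasure μ] :
    ∑ v, μ.real (cylE n v) = 1 := by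
  simpa using (integral_comp_pattern n μ fun _ => 1).symm

lemma tendsto_blockEntropy {l : Filter ℕ} {ν : ℕ → Measure (Cfg d A)} {μ : Measure (Cfg d A)}
    [∀ k, IsFiniteMeasure (ν k)] [IsFiniteMeasure μ]
    (h : ∀ g : Cfg d A → ℝ, Continuous g → Tendsto (fun k => ∫ x, g x ∂ν k) l (𝓝 (∫ x, g x ∂μ)))
    (n : ℕ) : Tendsto (fun k => blockEntropy n (ν k)) l (𝓝 (blockEntropy n μ)) := by
  refine (tendsto_finsetSum _ fun v _ => (Real.continuous_negMulLog.tendsto _).comp ?_).const_mul _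
  simp only [measureReal_cylE_eq_integral]
  exact h _ (continuous_comp_pattern n fun u => if u = v then (1 : ℝ) else 0)

/-- Gibbs' inequality for the marginal of `μ` on `E_N`, wrapped around the torus. -/
lemma entropy_add_integral_le_torusPressure {N : ℕ} [NeZero N] {f : Cfg d A → ℝ}
    (hf : Continuous f) {ε : ℝ} (hclose : ∀ x y, pattern N x = pattern N y →
      |boxSum f N x - boxSum f N y| ≤ ε * (N : ℝ) ^ d)
    (β : ℝ) {μ : Measure (Cfg d A)} [IsProbabilityMeasure μ] (hμ : Invariant μ) :
    entropy μ + β * ∫ x, f x ∂μ ≤ torusPressure N f β + |β| * ε := by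
  have hN : (0 : ℝ) < (N : ℝ) ^ d := by have := NeZero.pos N; positivity
  let E : ((Fin d → Fin N) → A) → ℝ := fun v => torusEnergy f (v ∘ (siteEquiv d N).symm)
  have hlog : logPartition E β = logPartition (torusEnergy (N := N) f) β :=
    logPartition_comp_equiv ((siteEquiv d N).arrowCongr (Equiv.refl A)) (torusEnergy f) β
  have hgibbs := energy_add_entropy_le_logPartition E β
    (p := fun v => μ.real (cylE N v)) (fun _ => measureReal_nonneg) (sum_measureReal_cylE N μ)
  rw [← integral_comp_pattern N μ E, hlog] at hgibbs
  have henergy : |∫ x, E (pattern N x) ∂μ - (N : ℝ) ^ d * ∫ x, f x ∂μ| ≤ ε * (N : ℝ) ^ d := by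
    rw [← integral_boxSum hμ hf N, ← integral_sub
      (integrable_of_continuous (continuous_comp_pattern N E) μ)
      (integrable_of_continuous (continuous_boxSum hf N) μ)]
    have hbound : ∀ x, ‖E (pattern N x) - boxSum f N x‖ ≤ ε * (N : ℝ) ^ d := fun x => by
      simp only [Real.norm_eq_abs, E, torusEnergy_eq_boxSum]
      exact hclose _ _ (pattern_unroll_siteEquiv_symm _)
    simpa using norm_integral_le_of_norm_le_const (μ := μ) (Eventually.of_forall hbound)
  have hscaled : β * ((N : ℝ) ^ d * ∫ x, f x ∂μ) - β * ∫ x, E (pattern N x) ∂μ ≤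
      |β| * (ε * (N : ℝ) ^ d) := by
    rw [← mul_sub]
    refine (le_abs_self _).trans ?_
    rw [abs_mul, abs_sub_comm]
    gcongr
  calc entropy μ + β * ∫ x, f x ∂μ ≤ blockEntropy N μ + β * ∫ x, f x ∂μ := by
        gcongr
        exact entropy_le_blockEntropy μ NeZero.one_le
    _ = ((N : ℝ) ^ d)⁻¹ * (∑ v, (μ.real (cylE N v)).negMulLog
          + β * ((N : ℝ) ^ d * ∫ x, f x ∂μ)) := by
        rw [blockEntropy]
        field_simp
    _ ≤ ((N : ℝ) ^ d)⁻¹ * (logPartition (torusEnergy (N := N) f) β + |β| * (ε * (N : ℝ) ^ d)) := by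
        refine mul_le_mul_of_nonneg_left ?_ (inv_pos.2 hN).le
        linarith
    _ = torusPressure N f β + |β| * ε := by
        rw [torusPressure]
        field_simp

end Measures

section PeriodicGibbs

variable {d : ℕ} {A : Type} [Fintype A]

/-- The shift-averaged Gibbs measure of the torus of side `N`, carried by periodic
configurations. -/
noncomputable def periodicGibbs [MeasurableSpace A] (N : ℕ) [NeZero N] (f : Cfg d A → ℝ) (β : ℝ) :
    Measure (Cfg d A) :=
  ∑ w : Torus d N → A, ∑ t, ENNReal.ofReal
    (gibbsWeight (torusEnergy f) β w * ((N : ℝ) ^ d)⁻¹) • Measure.dirac (unroll w t)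

section

variable (N : ℕ) [NeZero N] (f : Cfg d A → ℝ) (β : ℝ)

lemma gibbsWeight_mul_inv_pos [Nonempty A] (w : Torus d N → A) :
    0 < gibbsWeight (torusEnergy f) β w * ((N : ℝ) ^ d)⁻¹ := by
  have := NeZero.pos N
  have := gibbsWeight_pos (torusEnergy f) β w
  positivity

variable [MeasurableSpace A]

instance isProbabilityMeasure_periodicGibbs [Nonempty A] :
    IsProbabilityMeasure (periodicGibbs N f β) := by
  have hN : (N : ℝ) ^ d ≠ 0 := pow_ne_zero _ (Nat.cast_ne_zero.2 (NeZero.ne N))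
  constructor
  simp only [periodicGibbs, Measure.finsetSum_apply, Measure.smul_apply, smul_eq_mul, measure_univ,
    mul_one, Finset.sum_const, Finset.card_univ, card_torus, nsmul_eq_mul]
  rw [← Finset.mul_sum, ← ENNReal.ofReal_sum_of_nonneg fun w _ =>
    (gibbsWeight_mul_inv_pos N f β w).le, ← Finset.sum_mul, sum_gibbsWeight, one_mul]
  rw [← ENNReal.ofReal_natCast, ← ENNReal.ofReal_mul (Nat.cast_nonneg _), Nat.cast_pow,
    mul_inv_cancel₀ hN, ENNReal.ofReal_one]

lemma integral_periodicGibbs [Nonempty A] [TopologicalSpace A] [BorelSpace A] {g : Cfg d A → ℝ}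
    (hg : Continuous g) : ∫ x, g x ∂periodicGibbs N f β =
      ((N : ℝ) ^ d)⁻¹ * ∑ w : Torus d N → A, gibbsWeight (torusEnergy f) β w * torusEnergy g w := by
  have hint : ∀ (c : ℝ) (x : Cfg d A), Integrable g (ENNReal.ofReal c • Measure.dirac x) :=
    fun c x => (integrable_of_continuous hg _).smul_measure ENNReal.ofReal_ne_top
  rw [periodicGibbs, integral_finsetSum_measure fun w _ =>
    integrable_finsetSum_measure.2 fun t _ => hint _ _, Finset.mul_sum]
  refine Finset.sum_congr rfl fun w _ => ?_
  rw [integral_finsetSum_measure fun t _ => hint _ _]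
  simp only [integral_smul_measure, integral_dirac' _ _ hg.stronglyMeasurable]
  rw [← Finset.smul_sum, ENNReal.toReal_ofReal (gibbsWeight_mul_inv_pos N f β w).le, smul_eq_mul,
    torusEnergy]
  ring

end

variable [MeasurableSpace A] {N : ℕ} [NeZero N] [Nonempty A]

lemma measureReal_cylE_periodicGibbs_pos (f : Cfg d A → ℝ) (β : ℝ) {n : ℕ} (hnN : n ≤ N)
    (v : (Fin d → Fin n) → A) : 0 < (periodicGibbs N f β).real (cylE n v) := by
  let w : Torus d N → A :=
    Function.extend (fun m => toTorus N (siteOf m)) v fun _ => Classical.arbitrary A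
  have hw : unroll w 0 ∈ cylE n v := fun m => by
    change w (0 + toTorus N (siteOf m)) = v m
    rw [zero_add]
    exact (toTorus_siteOf_injective hnN).extend_apply v _ m
  refine ENNReal.toReal_pos (ne_of_gt ?_) (measure_ne_top _ _)
  calc 0 < ENNReal.ofReal (gibbsWeight (torusEnergy f) β w * ((N : ℝ) ^ d)⁻¹) :=
        ENNReal.ofReal_pos.2 (gibbsWeight_mul_inv_pos N f β w)
    _ = (ENNReal.ofReal (gibbsWeight (torusEnergy f) β w * ((N : ℝ) ^ d)⁻¹) •
          Measure.dirac (unroll w 0)) (cylE n v) := by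
        rw [Measure.smul_apply, Measure.dirac_apply_of_mem hw, smul_eq_mul, mul_one]
    _ ≤ periodicGibbs N f β (cylE n v) := by
        simp only [periodicGibbs, Measure.finsetSum_apply]
        exact (Finset.single_le_sum_of_canonicallyOrdered (Finset.mem_univ (0 : Torus d N))).trans
          (Finset.single_le_sum_of_canonicallyOrdered
            (f := fun w => ∑ t, (ENNReal.ofReal
              (gibbsWeight (torusEnergy f) β w * ((N : ℝ) ^ d)⁻¹) •
                Measure.dirac (unroll w t)) (cylE n v)) (Finset.mem_univ w))

variable [TopologicalSpace A] [DiscreteTopology A] [BorelSpace A]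

/-- The Gibbs weights attain equality in Gibbs' inequality for the energy of `f`; apply the
inequality to the energy built from the logarithm of the marginal on `E_n`. -/
lemma torusPressure_le_integral_add_blockEntropy {n : ℕ} (hnN : n ∣ N) {f : Cfg d A → ℝ}
    (hf : Continuous f) (β : ℝ) :
    torusPressure N f β ≤
      β * ∫ x, f x ∂periodicGibbs N f β + blockEntropy n (periodicGibbs N f β) := by
  let q : ((Fin d → Fin n) → A) → ℝ := fun v => (periodicGibbs N f β).real (cylE n v)
  have hq : ∀ v, 0 < q v :=
    measureReal_cylE_periodicGibbs_pos f β (Nat.le_of_dvd (NeZero.pos N) hnN)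
  let g : Cfg d A → ℝ := fun x => ((n : ℝ) ^ d)⁻¹ * Real.log (q (pattern n x))
  have hg : Continuous g :=
    continuous_comp_pattern n fun v => ((n : ℝ) ^ d)⁻¹ * Real.log (q v)
  have hequality := energy_add_entropy_gibbsWeight (torusEnergy (N := N) f) β
  have hgibbs := (energy_add_entropy_le_logPartition (torusEnergy (N := N) g) 1
    (fun w => (gibbsWeight_pos (torusEnergy f) β w).le) (sum_gibbsWeight _ β)).trans
      (logPartition_torusEnergy_log_pattern_nonpos hnN hq (sum_measureReal_cylE n _))
  have hentropy : ∫ x, g x ∂periodicGibbs N f β = -blockEntropy n (periodicGibbs N f β) := by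
    rw [integral_comp_pattern n _ fun v => ((n : ℝ) ^ d)⁻¹ * Real.log (q v), blockEntropy,
      ← mul_neg, ← Finset.sum_neg_distrib, Finset.mul_sum]
    exact Finset.sum_congr rfl fun v _ => by rw [Real.negMulLog]; ring
  rw [← neg_neg (blockEntropy n _), ← hentropy, integral_periodicGibbs N f β hf,
    integral_periodicGibbs N f β hg, torusPressure, ← hequality,
    mul_left_comm, ← mul_neg, ← mul_add]
  refine mul_le_mul_of_nonneg_left ?_ (by positivity)
  linarith

end PeriodicGibbs

section VariationalPrinciple

variable {d : ℕ} {A : Type} [Fintype A] [TopologicalSpace A] {f : Cfg d A → ℝ} {β L : ℝ}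

instance neZero_factorial (k : ℕ) : NeZero k.factorial := ⟨Nat.factorial_ne_zero k⟩

lemma exists_tendsto_torusPressure [Nonempty A] (hf : Continuous f) (β : ℝ) (𝒰 : Ultrafilter ℕ) :
    ∃ L, Tendsto (fun k : ℕ => torusPressure k.factorial f β) 𝒰 (𝓝 L) := by
  obtain ⟨B, -, hB⟩ := exists_forall_abs_le hf
  have hbounded : ∀ k : ℕ, torusPressure k.factorial f β ∈
      Set.Icc (-(Real.log (Fintype.card A) + |β| * B)) (Real.log (Fintype.card A) + |β| * B) :=
    fun k => abs_le.1 (abs_torusPressure_le _ hB β)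
  obtain ⟨L, -, hL⟩ := isCompact_Icc.ultrafilter_le_nhds
    (𝒰.map fun k : ℕ => torusPressure k.factorial f β)
    (le_principal_iff.2 (mem_map.2 (Eventually.of_forall hbounded)))
  exact ⟨L, hL⟩

variable [DiscreteTopology A] [MeasurableSpace A] [BorelSpace A]

lemma entropy_add_integral_le_of_tendsto (hf : Continuous f) {l : Filter ℕ} [l.NeBot]
    (hl : l ≤ atTop) (hL : Tendsto (fun k : ℕ => torusPressure k.factorial f β) l (𝓝 L))
    {μ : Measure (Cfg d A)} [IsProbabilityMeasure μ] (hμ : Invariant μ) :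
    entropy μ + β * ∫ x, f x ∂μ ≤ L := by
  refine le_of_forall_pos_le_add fun ε hε => ?_
  have hfactorial : Tendsto Nat.factorial atTop atTop :=
    tendsto_atTop_mono Nat.self_le_factorial tendsto_id
  have hclose := (hfactorial.eventually
    (eventually_abs_boxSum_sub_le hf (ε := ε / (|β| + 1)) (by positivity))).filter_mono hl
  refine ge_of_tendsto (hL.add_const ε) (hclose.mono fun k hk => ?_)
  have hε' : |β| * (ε / (|β| + 1)) ≤ ε := by
    rw [mul_div_left_comm]
    exact mul_le_of_le_one_right hε.le ((div_le_one (by positivity)).2 (by linarith))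
  linarith [entropy_add_integral_le_torusPressure hf hk β hμ]

variable [Nonempty A]

lemma exists_invariant_le_of_tendsto (hf : Continuous f) {𝒰 : Ultrafilter ℕ}
    (h𝒰 : (𝒰 : Filter ℕ) ≤ atTop)
    (hL : Tendsto (fun k : ℕ => torusPressure k.factorial f β) 𝒰 (𝓝 L)) :
    ∃ μ : Measure (Cfg d A), IsProbabilityMeasure μ ∧ Invariant μ ∧
      L ≤ entropy μ + β * ∫ x, f x ∂μ := by
  obtain ⟨μ, hprob, hμ⟩ :=
    exists_forall_tendsto_integral 𝒰 fun k : ℕ => periodicGibbs k.factorial f β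
  refine ⟨μ, hprob, invariant_of_integral_comp_shift fun n g hg => ?_, ?_⟩
  · have hshift : Continuous fun x => g (shift n x) := hg.comp (continuous_shift n)
    refine tendsto_nhds_unique (hμ _ hshift) ((hμ g hg).congr fun k => ?_)
    rw [integral_periodicGibbs _ f β hg, integral_periodicGibbs _ f β hshift]
    simp only [torusEnergy_comp_shift]
  · rw [← sub_le_iff_le_add]
    have : Nonempty {n : ℕ // 1 ≤ n} := ⟨⟨1, le_rfl⟩⟩
    refine le_ciInf fun ⟨n, hn⟩ => ?_
    rw [sub_le_iff_le_add']
    refine le_of_tendsto_of_tendsto hL (((hμ f hf).const_mul β).add (tendsto_blockEntropy hμ n))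
      (((eventually_ge_atTop n).filter_mono h𝒰).mono fun k hk => ?_)
    exact torusPressure_le_integral_add_blockEntropy (Nat.dvd_factorial hn hk) hf β

lemma isGreatest_of_tendsto_torusPressure (hf : Continuous f) {𝒰 : Ultrafilter ℕ}
    (h𝒰 : (𝒰 : Filter ℕ) ≤ atTop)
    (hL : Tendsto (fun k : ℕ => torusPressure k.factorial f β) 𝒰 (𝓝 L)) :
    IsGreatest { r | ∃ μ : Measure (Cfg d A), IsProbabilityMeasure μ ∧ Invariant μ ∧
      r = entropy μ + β * ∫ x, f x ∂μ } L := by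
  obtain ⟨μ, hprob, hμ, hle⟩ := exists_invariant_le_of_tendsto hf h𝒰 hL
  refine ⟨⟨μ, hprob, hμ, hle.antisymm (entropy_add_integral_le_of_tendsto hf h𝒰 hL hμ)⟩, ?_⟩
  rintro _ ⟨ν, _, hν, rfl⟩
  exact entropy_add_integral_le_of_tendsto hf h𝒰 hL hν

theorem tendsto_torusPressure_factorial (hf : Continuous f) (β : ℝ) :
    Tendsto (fun k : ℕ => torusPressure k.factorial f β) atTop (𝓝 (pressure f β)) :=
  (tendsto_iff_ultrafilter _ _ _).2 fun 𝒰 h𝒰 => by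
    obtain ⟨L, hL⟩ := exists_tendsto_torusPressure hf β 𝒰
    rwa [pressure, (isGreatest_of_tendsto_torusPressure hf h𝒰 hL).csSup_eq]

theorem isGreatest_pressure (hf : Continuous f) (β : ℝ) :
    IsGreatest { r | ∃ μ : Measure (Cfg d A), IsProbabilityMeasure μ ∧ Invariant μ ∧
      r = entropy μ + β * ∫ x, f x ∂μ } (pressure f β) :=
  isGreatest_of_tendsto_torusPressure hf Nat.hyperfilter_le_atTop
    ((tendsto_torusPressure_factorial hf β).mono_left Nat.hyperfilter_le_atTop)

lemma ES_nonempty (hf : Continuous f) (β : ℝ) : (ES f β).Nonempty :=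
  let ⟨μ, hprob, hμ, h⟩ := (isGreatest_pressure hf β).1
  ⟨μ, hprob, hμ, h.symm⟩

lemma entropy_add_integral_le_pressure (hf : Continuous f) (β : ℝ) {μ : Measure (Cfg d A)}
    [hprob : IsProbabilityMeasure μ] (hμ : Invariant μ) :
    entropy μ + β * ∫ x, f x ∂μ ≤ pressure f β :=
  (isGreatest_pressure hf β).2 ⟨μ, hprob, hμ, rfl⟩

end VariationalPrinciple

section LocalObservable

variable {d : ℕ} {A : Type} {N : ℕ}

/-- The translate of `E_k` by `t` in the torus. -/
noncomputable def torusCube (k : ℕ) (t : Torus d N) : Finset (Torus d N) :=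
  Finset.univ.image fun m : Fin d → Fin k => t + toTorus N (siteOf m)

/-- The translations that make `Λ` meet `S`. -/
def hittingSet [NeZero N] (Λ : Finset (Fin d → ℤ)) (S : Finset (Torus d N)) :
    Finset (Torus d N) :=
  {t | ∃ l ∈ Λ, t + toTorus N l ∈ S}

lemma card_torusCube_le (k : ℕ) (t : Torus d N) : (torusCube k t).card ≤ k ^ d :=
  Finset.card_image_le.trans (by simp)

lemma sum_torusCube {k : ℕ} (hkN : k ≤ N) (f : Cfg d A → ℝ) (w : Torus d N → A) (t : Torus d N) :
    ∑ u ∈ torusCube k t, f (unroll w u) = boxSum f k (unroll w t) := by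
  rw [torusCube, Finset.sum_image fun m _ m' _ h =>
    toTorus_siteOf_injective hkN (add_left_cancel h)]
  simp only [boxSum, shift_unroll]

lemma torusEnergy_sub_boxSum [NeZero N] {k : ℕ} (hkN : k ≤ N) (f : Cfg d A → ℝ)
    (w : Torus d N → A) (t : Torus d N) :
    torusEnergy f w - boxSum f k (unroll w t) = ∑ u ∈ (torusCube k t)ᶜ, f (unroll w u) := by
  rw [sub_eq_iff_eq_add, ← sum_torusCube hkN, torusEnergy, Finset.sum_compl_add_sum]

lemma card_hittingSet_le [NeZero N] (Λ : Finset (Fin d → ℤ)) (S : Finset (Torus d N)) :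
    (hittingSet Λ S).card ≤ S.card * Λ.card := by
  have hsub : hittingSet Λ S ⊆ (S ×ˢ Λ).image fun p => p.1 - toTorus N p.2 := fun t ht => by
    obtain ⟨l, hl, htl⟩ := (Finset.mem_filter.1 ht).2
    exact Finset.mem_image.2 ⟨(_, l), Finset.mem_product.2 ⟨htl, hl⟩, add_sub_cancel_right t _⟩
  exact (Finset.card_le_card hsub).trans (Finset.card_image_le.trans (Finset.card_product _ _).le)

lemma card_hittingSet_torusCube_sdiff_le [NeZero N] {Λ : Finset (Fin d → ℤ)} {r : ℕ}
    (hΛ : ∀ l ∈ Λ, supNorm l ≤ r) (k : ℕ) (t : Torus d N) :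
    (hittingSet Λ (torusCube k t) \ torusCube k t).card ≤ (collar d r k).card := by
  have hsub : hittingSet Λ (torusCube k t) \ torusCube k t ⊆
      (collar d r k).image fun m => t + toTorus N m := fun u hu => by
    obtain ⟨hhit, hout⟩ := Finset.mem_sdiff.1 hu
    obtain ⟨l, hl, hul⟩ := (Finset.mem_filter.1 hhit).2
    obtain ⟨m, -, hm⟩ := Finset.mem_image.1 hul
    have hu_eq : t + toTorus N (siteOf m - l) = u := by
      rw [map_sub, ← add_sub_assoc, hm, add_sub_cancel_right]
    refine Finset.mem_image.2 ⟨siteOf m - l, Finset.mem_sdiff.2 ⟨mem_box.2 fun i => ?_, ?_⟩, hu_eq⟩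
    · have hli := abs_le.1 ((abs_le_supNorm l i).trans (Int.ofNat_le.2 (hΛ l hl)))
      simp only [Pi.sub_apply, siteOf]
      omega
    · refine fun hinner => hout (Finset.mem_image.2 ⟨fun i => ⟨((siteOf m - l) i).toNat, ?_⟩,
        Finset.mem_univ _, ?_⟩)
      · have := mem_box.1 hinner i
        omega
      · rw [← hu_eq]
        congr 2
        funext i
        have := mem_box.1 hinner i
        simp only [siteOf]
        omega
  exact (Finset.card_le_card hsub).trans Finset.card_image_le

variable [NeZero N] {Λ : Finset (Fin d → ℤ)} {g : Cfg d A → ℝ} {B : ℝ}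

lemma apply_unroll_eq_of_notMem_hittingSet (hg : DependsOn g (Λ : Set (Fin d → ℤ)))
    {S : Finset (Torus d N)} {w w' : Torus d N → A} (hw : ∀ t ∉ S, w t = w' t) {t : Torus d N}
    (ht : t ∉ hittingSet Λ S) : g (unroll w t) = g (unroll w' t) :=
  hg fun l hl => hw _ fun hmem => ht (Finset.mem_filter.2 ⟨Finset.mem_univ t, l, hl, hmem⟩)

lemma abs_sum_unroll_sub_le (hg : DependsOn g (Λ : Set (Fin d → ℤ))) (hB : ∀ x, |g x| ≤ B)
    {S : Finset (Torus d N)} {w w' : Torus d N → A} (hw : ∀ t ∉ S, w t = w' t)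
    (T : Finset (Torus d N)) :
    |∑ t ∈ T, (g (unroll w t) - g (unroll w' t))| ≤ 2 * B * (T ∩ hittingSet Λ S).card := by
  rw [← Finset.sum_subset Finset.inter_subset_left fun t htT ht => sub_eq_zero.2
    (apply_unroll_eq_of_notMem_hittingSet hg hw fun hhit => ht (Finset.mem_inter.2 ⟨htT, hhit⟩))]
  refine (Finset.abs_sum_le_sum_abs _ _).trans
    ((Finset.sum_le_card_nsmul _ _ (2 * B) fun t _ => ?_).trans_eq ?_)
  · linarith [abs_sub (g (unroll w t)) (g (unroll w' t)), hB (unroll w t), hB (unroll w' t)]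
  · rw [nsmul_eq_mul, mul_comm]

lemma abs_sum_unroll_sub_le_card_mul (hg : DependsOn g (Λ : Set (Fin d → ℤ)))
    (hB : ∀ x, |g x| ≤ B) {S : Finset (Torus d N)} {w w' : Torus d N → A}
    (hw : ∀ t ∉ S, w t = w' t) (T : Finset (Torus d N)) :
    |∑ t ∈ T, (g (unroll w t) - g (unroll w' t))| ≤ 2 * S.card * B * Λ.card := by
  have hB0 : 0 ≤ B := (abs_nonneg _).trans (hB (unroll w 0))
  have hcard : ((T ∩ hittingSet Λ S).card : ℝ) ≤ S.card * Λ.card := by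
    exact_mod_cast (Finset.card_le_card Finset.inter_subset_right).trans (card_hittingSet_le Λ S)
  calc _ ≤ 2 * B * (T ∩ hittingSet Λ S).card := abs_sum_unroll_sub_le hg hB hw T
    _ ≤ 2 * B * (S.card * Λ.card) := by gcongr
    _ = 2 * S.card * B * Λ.card := by ring

lemma torusEnergy_sub_eq_of_separated (hg : DependsOn g (Λ : Set (Fin d → ℤ))) {r : ℕ}
    (hΛ : ∀ l ∈ Λ, supNorm l ≤ r) {S S' : Finset (Torus d N)}
    (hsep : ∀ t ∈ S, ∀ m : Fin d → ℤ, (∀ i, |m i| ≤ 2 * r) → t + toTorus N m ∉ S')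
    {w₁ w₂ w₁' w₂' : Torus d N → A} (h : ∀ t ∉ S, w₁ t = w₂ t) (h' : ∀ t ∉ S, w₁' t = w₂' t)
    (h₁ : ∀ t ∉ S', w₁ t = w₁' t) (h₂ : ∀ t ∉ S', w₂ t = w₂' t) :
    torusEnergy g w₁ - torusEnergy g w₂ = torusEnergy g w₁' - torusEnergy g w₂' := by
  simp only [torusEnergy, ← Finset.sum_sub_distrib]
  refine Finset.sum_congr rfl fun t _ => ?_
  by_cases ht : t ∈ hittingSet Λ S
  · obtain ⟨l, hl, htl⟩ := (Finset.mem_filter.1 ht).2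
    have ht' : t ∉ hittingSet Λ S' := fun hmem => by
      obtain ⟨l', hl', htl'⟩ := (Finset.mem_filter.1 hmem).2
      refine hsep _ htl (l' - l) (fun i => ?_) (by rwa [map_sub, add_assoc, add_sub_cancel])
      have hli := abs_le.1 ((abs_le_supNorm l i).trans (Int.ofNat_le.2 (hΛ l hl)))
      have hli' := abs_le.1 ((abs_le_supNorm l' i).trans (Int.ofNat_le.2 (hΛ l' hl')))
      rw [Pi.sub_apply, abs_le]
      omega
    rw [apply_unroll_eq_of_notMem_hittingSet hg h₁ ht',
      apply_unroll_eq_of_notMem_hittingSet hg h₂ ht']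
  · rw [apply_unroll_eq_of_notMem_hittingSet hg h ht,
      apply_unroll_eq_of_notMem_hittingSet hg h' ht, sub_self, sub_self]

end LocalObservable

section AbsSummable

variable {d : ℕ} {A : Type}

/-- The finite subsets of `ℤ^d` that contain the origin. -/
abbrev OriginFinset (d : ℕ) : Type := {Λ : Finset (Fin d → ℤ) // (0 : Fin d → ℤ) ∈ Λ}

/-- The supremum norm of `Φ_Λ`. -/
noncomputable def termNorm (Φ : Finset (Fin d → ℤ) → Cfg d A → ℝ) (Λ : OriginFinset d) : ℝ :=
  ⨆ x, |Φ Λ.1 x|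

/-- Absolutely summable families of local functions; no relation between `Φ_Λ` and its translates
is imposed. -/
structure IsAbsSummable (Φ : Finset (Fin d → ℤ) → Cfg d A → ℝ) : Prop where
  dependsOn : ∀ Λ : OriginFinset d, DependsOn (Φ Λ.1) (Λ.1 : Set (Fin d → ℤ))
  summable : Summable (termNorm Φ)

/-- The finite sets that reach beyond distance `r` from the origin. -/
def farReaching (d r : ℕ) : Set (OriginFinset d) := {Λ | ∃ l ∈ Λ.1, r < supNorm l}

/-- The part of `Σ_{Λ ∋ 0} ‖Φ_Λ‖` carried by interactions of range greater than `r`. -/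
noncomputable def tailNorm (Φ : Finset (Fin d → ℤ) → Cfg d A → ℝ) (r : ℕ) : ℝ :=
  ∑' Λ, (farReaching d r).indicator (termNorm Φ) Λ

variable {Φ : Finset (Fin d → ℤ) → Cfg d A → ℝ}

lemma termNorm_nonneg (Λ : OriginFinset d) : 0 ≤ termNorm Φ Λ :=
  Real.iSup_nonneg fun _ => abs_nonneg _

lemma tailNorm_nonneg (r : ℕ) : 0 ≤ tailNorm Φ r :=
  tsum_nonneg (Set.indicator_nonneg fun Λ _ => termNorm_nonneg Λ)

lemma one_le_card_originFinset (Λ : OriginFinset d) : (1 : ℝ) ≤ Λ.1.card :=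
  Nat.one_le_cast.2 (Finset.card_pos.2 ⟨0, Λ.2⟩)

lemma supNorm_le_of_notMem_farReaching {r : ℕ} {Λ : OriginFinset d} (hΛ : Λ ∉ farReaching d r) :
    ∀ l ∈ Λ.1, supNorm l ≤ r := fun l hl => not_lt.1 fun h => hΛ ⟨l, hl, h⟩

namespace IsAbsSummable

lemma hasSum_tailNorm (hΦ : IsAbsSummable Φ) (r : ℕ) :
    HasSum ((farReaching d r).indicator (termNorm Φ)) (tailNorm Φ r) :=
  (hΦ.summable.indicator _).hasSum

lemma tendsto_tailNorm (hΦ : IsAbsSummable Φ) : Tendsto (tailNorm Φ) atTop (𝓝 0) := by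
  rw [← tsum_zero (β := OriginFinset d)]
  refine tendsto_tsum_of_dominated_convergence hΦ.summable (fun Λ => ?_)
    (Eventually.of_forall fun r Λ => ?_)
  · refine tendsto_const_nhds.congr' ((eventually_ge_atTop (Λ.1.sup supNorm)).mono fun r hr => ?_)
    refine (Set.indicator_of_notMem ?_ _).symm
    rintro ⟨l, hl, hlt⟩
    exact hlt.not_ge ((Finset.le_sup hl).trans hr)
  · rw [Real.norm_eq_abs, abs_of_nonneg (Set.indicator_nonneg (fun _ _ => termNorm_nonneg _) _)]
    exact Set.indicator_le_self' (fun _ _ => termNorm_nonneg _) _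

variable [TopologicalSpace A] [DiscreteTopology A]

lemma continuous_term (hΦ : IsAbsSummable Φ) (Λ : OriginFinset d) : Continuous (Φ Λ.1) := by
  obtain ⟨g, hg⟩ := dependsOn_iff_exists_comp.1 (hΦ.dependsOn Λ)
  rw [hg]
  exact (continuous_of_discreteTopology (f := g)).comp (by unfold Set.domRestrict; fun_prop)

variable [Finite A]

lemma abs_term_le (hΦ : IsAbsSummable Φ) (Λ : OriginFinset d) (x : Cfg d A) :
    |Φ Λ.1 x| ≤ termNorm Φ Λ := by
  obtain ⟨B, -, hB⟩ := exists_forall_abs_le (hΦ.continuous_term Λ)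
  exact le_ciSup (f := fun x => |Φ Λ.1 x|) ⟨B, Set.forall_mem_range.2 hB⟩ x

lemma norm_term_div_card_le (hΦ : IsAbsSummable Φ) (Λ : OriginFinset d) (x : Cfg d A) :
    ‖Φ Λ.1 x / (Λ.1.card : ℝ)‖ ≤ termNorm Φ Λ := by
  rw [norm_div, Real.norm_natCast]
  exact (div_le_self (norm_nonneg _) (one_le_card_originFinset Λ)).trans (hΦ.abs_term_le Λ x)

lemma continuous_potential (hΦ : IsAbsSummable Φ) : Continuous (potentialOfInteraction Φ) :=
  continuous_tsum (fun Λ => (hΦ.continuous_term Λ).div_const _) hΦ.summable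
    hΦ.norm_term_div_card_le

lemma hasSum_potential_sub (hΦ : IsAbsSummable Φ) {J : Type*} (T : Finset J) (X Y : J → Cfg d A) :
    HasSum (fun Λ : OriginFinset d => (∑ t ∈ T, (Φ Λ.1 (X t) - Φ Λ.1 (Y t))) / (Λ.1.card : ℝ))
      (∑ t ∈ T, (potentialOfInteraction Φ (X t) - potentialOfInteraction Φ (Y t))) := by
  have hpot : ∀ x, HasSum (fun Λ : OriginFinset d => Φ Λ.1 x / (Λ.1.card : ℝ))
      (potentialOfInteraction Φ x) := fun x =>
    (Summable.of_norm_bounded hΦ.summable fun Λ => hΦ.norm_term_div_card_le Λ x).hasSum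
  simp only [Finset.sum_div, sub_div]
  exact hasSum_sum fun t _ => (hpot (X t)).sub (hpot (Y t))

lemma hasSum_torusEnergy_sub (hΦ : IsAbsSummable Φ) {N : ℕ} [NeZero N] (w w' : Torus d N → A) :
    HasSum (fun Λ : OriginFinset d =>
      (torusEnergy (Φ Λ.1) w - torusEnergy (Φ Λ.1) w') / (Λ.1.card : ℝ))
      (torusEnergy (potentialOfInteraction Φ) w - torusEnergy (potentialOfInteraction Φ) w') := by
  simp only [torusEnergy, ← Finset.sum_sub_distrib]
  exact hΦ.hasSum_potential_sub _ _ _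

end IsAbsSummable

lemma abs_le_of_hasSum_div_card {F b : OriginFinset d → ℝ} {x y : ℝ}
    (hF : HasSum (fun Λ => F Λ / (Λ.1.card : ℝ)) x) (hb : HasSum b y)
    (h : ∀ Λ, |F Λ| ≤ b Λ * Λ.1.card) : |x| ≤ y := by
  refine hF.norm_le_of_bounded hb fun Λ => ?_
  have hcard : (0 : ℝ) < Λ.1.card := one_pos.trans_le (one_le_card_originFinset Λ)
  rw [norm_div, Real.norm_natCast, div_le_iff₀ hcard]
  exact h Λ

end AbsSummable

section InteractionEnergy

variable {d : ℕ} {A : Type} [Finite A] [TopologicalSpace A] [DiscreteTopology A]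
  {Φ : Finset (Fin d → ℤ) → Cfg d A → ℝ} {N : ℕ} [NeZero N]

lemma IsAbsSummable.abs_torusEnergy_sub_le (hΦ : IsAbsSummable Φ) {S : Finset (Torus d N)}
    {w w' : Torus d N → A} (hw : ∀ t ∉ S, w t = w' t) :
    |torusEnergy (potentialOfInteraction Φ) w - torusEnergy (potentialOfInteraction Φ) w'| ≤
      2 * S.card * ∑' Λ, termNorm Φ Λ := by
  refine abs_le_of_hasSum_div_card (hΦ.hasSum_torusEnergy_sub w w')
    (hΦ.summable.hasSum.mul_left (2 * (S.card : ℝ))) fun Λ => ?_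
  simp only [torusEnergy, ← Finset.sum_sub_distrib]
  exact abs_sum_unroll_sub_le_card_mul (hΦ.dependsOn Λ) (hΦ.abs_term_le Λ) hw Finset.univ

/-- Terms of range at most `r` see at most one of the two sets, so only the tail contributes. -/
lemma IsAbsSummable.abs_torusEnergy_cross_le (hΦ : IsAbsSummable Φ) {r : ℕ}
    {S S' : Finset (Torus d N)}
    (hsep : ∀ t ∈ S, ∀ m : Fin d → ℤ, (∀ i, |m i| ≤ 2 * r) → t + toTorus N m ∉ S')
    {w₁ w₂ w₁' w₂' : Torus d N → A} (h : ∀ t ∉ S, w₁ t = w₂ t) (h' : ∀ t ∉ S, w₁' t = w₂' t)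
    (h₁ : ∀ t ∉ S', w₁ t = w₁' t) (h₂ : ∀ t ∉ S', w₂ t = w₂' t) :
    |(torusEnergy (potentialOfInteraction Φ) w₁ - torusEnergy (potentialOfInteraction Φ) w₂) -
      (torusEnergy (potentialOfInteraction Φ) w₁' - torusEnergy (potentialOfInteraction Φ) w₂')| ≤
      4 * S.card * tailNorm Φ r := by
  have hdiff := (hΦ.hasSum_torusEnergy_sub w₁ w₂).sub (hΦ.hasSum_torusEnergy_sub w₁' w₂')
  simp only [← sub_div] at hdiff
  refine abs_le_of_hasSum_div_card hdiff
    ((hΦ.hasSum_tailNorm r).mul_left (4 * (S.card : ℝ))) fun Λ => ?_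
  by_cases hΛ : Λ ∈ farReaching d r
  · have hle := abs_sum_unroll_sub_le_card_mul (hΦ.dependsOn Λ) (hΦ.abs_term_le Λ) h Finset.univ
    have hle' := abs_sum_unroll_sub_le_card_mul (hΦ.dependsOn Λ) (hΦ.abs_term_le Λ) h' Finset.univ
    rw [Finset.sum_sub_distrib] at hle hle'
    rw [Set.indicator_of_mem hΛ]
    exact (abs_sub _ _).trans ((add_le_add hle hle').trans_eq (by ring))
  · rw [Set.indicator_of_notMem hΛ, mul_zero, zero_mul, torusEnergy_sub_eq_of_separated
      (hΦ.dependsOn Λ) (supNorm_le_of_notMem_farReaching hΛ) hsep h h' h₁ h₂, sub_self, abs_zero]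

lemma IsAbsSummable.abs_sum_compl_torusCube_sub_le (hΦ : IsAbsSummable Φ) (k r : ℕ)
    {t : Torus d N} {w w' : Torus d N → A} (hw : ∀ u ∉ torusCube k t, w u = w' u) :
    |∑ u ∈ (torusCube k t)ᶜ, (potentialOfInteraction Φ (unroll w u) -
      potentialOfInteraction Φ (unroll w' u))| ≤
      2 * (collar d r k).card * ∑' Λ, termNorm Φ Λ + 2 * (k : ℝ) ^ d * tailNorm Φ r := by
  refine abs_le_of_hasSum_div_card (hΦ.hasSum_potential_sub _ _ _)
    ((hΦ.summable.hasSum.mul_left _).add ((hΦ.hasSum_tailNorm r).mul_left _)) fun Λ => ?_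
  have hnorm := termNorm_nonneg (Φ := Φ) Λ
  by_cases hΛ : Λ ∈ farReaching d r
  · have hcube : ((torusCube k t).card : ℝ) ≤ (k : ℝ) ^ d := by
      exact_mod_cast card_torusCube_le k t
    rw [Set.indicator_of_mem hΛ]
    refine (abs_sum_unroll_sub_le_card_mul (hΦ.dependsOn Λ) (hΦ.abs_term_le Λ) hw _).trans
      (mul_le_mul_of_nonneg_right ?_ (Nat.cast_nonneg _))
    refine le_add_of_nonneg_of_le (by positivity) ?_
    gcongr
  · have hcollar : (((torusCube k t)ᶜ ∩ hittingSet Λ.1 (torusCube k t)).card : ℝ) ≤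
        (collar d r k).card := by
      rw [Finset.inter_comm, ← Finset.sdiff_eq_inter_compl]
      exact_mod_cast card_hittingSet_torusCube_sdiff_le (supNorm_le_of_notMem_farReaching hΛ) k t
    rw [Set.indicator_of_notMem hΛ, mul_zero, add_zero]
    calc _ ≤ 2 * termNorm Φ Λ * ((torusCube k t)ᶜ ∩ hittingSet Λ.1 (torusCube k t)).card :=
          abs_sum_unroll_sub_le (hΦ.dependsOn Λ) (hΦ.abs_term_le Λ) hw _
      _ ≤ 2 * termNorm Φ Λ * (collar d r k).card := by gcongr
      _ = 2 * (collar d r k).card * termNorm Φ Λ := by ring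
      _ ≤ 2 * (collar d r k).card * termNorm Φ Λ * Λ.1.card :=
          le_mul_of_one_le_right (by positivity) (one_le_card_originFinset Λ)

lemma IsAbsSummable.eventually_abs_torusEnergy_sub_boxSum_le (hΦ : IsAbsSummable Φ) {ε : ℝ}
    (hε : 0 < ε) :
    ∀ᶠ k : ℕ in atTop, ∀ (N : ℕ) [NeZero N], k ≤ N → ∀ (t : Torus d N) (w w' : Torus d N → A),
      (∀ u ∉ torusCube k t, w u = w' u) →
      |(torusEnergy (potentialOfInteraction Φ) w - torusEnergy (potentialOfInteraction Φ) w') -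
        (boxSum (potentialOfInteraction Φ) k (unroll w t) -
          boxSum (potentialOfInteraction Φ) k (unroll w' t))| ≤ ε * (k : ℝ) ^ d := by
  have hnorm : 0 ≤ ∑' Λ, termNorm Φ Λ := tsum_nonneg termNorm_nonneg
  obtain ⟨r, hr⟩ := (hΦ.tendsto_tailNorm.eventually_le_const
    (show 0 < ε / 4 by positivity)).exists
  filter_upwards [eventually_card_collar_le d r
    (ε := ε / 4 / (∑' Λ, termNorm Φ Λ + 1)) (by positivity)] with k hk
  intro N _ hkN t w w' hw
  rw [sub_sub_sub_comm, torusEnergy_sub_boxSum hkN, torusEnergy_sub_boxSum hkN,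
    ← Finset.sum_sub_distrib]
  have hratio : (∑' Λ, termNorm Φ Λ) / (∑' Λ, termNorm Φ Λ + 1) ≤ 1 :=
    (div_le_one (by positivity)).2 (by linarith)
  calc _ ≤ 2 * (collar d r k).card * ∑' Λ, termNorm Φ Λ + 2 * (k : ℝ) ^ d * tailNorm Φ r :=
        hΦ.abs_sum_compl_torusCube_sub_le k r hw
    _ ≤ 2 * (ε / 4 / (∑' Λ, termNorm Φ Λ + 1) * (k : ℝ) ^ d) * ∑' Λ, termNorm Φ Λ +
          2 * (k : ℝ) ^ d * (ε / 4) := by gcongr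
    _ = ε * (k : ℝ) ^ d / 2 * ((∑' Λ, termNorm Φ Λ) / (∑' Λ, termNorm Φ Λ + 1)) +
          ε * (k : ℝ) ^ d / 2 := by ring
    _ ≤ ε * (k : ℝ) ^ d / 2 * 1 + ε * (k : ℝ) ^ d / 2 := by gcongr
    _ = ε * (k : ℝ) ^ d := by ring

end InteractionEnergy

section Blocks

variable {d : ℕ} {A : Type} {L M k : ℕ}

/-- The configuration `η` with its block of index `j` overwritten by the pattern `ω j`. -/
noncomputable def overwriteBlocks (η : Torus d (L * M) → A)
    (ω : (Fin d → Fin M) → (Fin d → Fin k) → A) : Torus d (L * M) → A :=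
  Function.extend (blockSite L) (fun p => ω p.1 p.2) η

lemma pattern_unroll_overwriteBlocks (hkL : k ≤ L) (η : Torus d (L * M) → A)
    (ω : (Fin d → Fin M) → (Fin d → Fin k) → A) (j : Fin d → Fin M) :
    pattern k (unroll (overwriteBlocks η ω) (blockCorner L j)) = ω j :=
  funext fun m => (blockSite_injective hkL).extend_apply (fun p => ω p.1 p.2) η (j, m)

lemma overwriteBlocks_congr (hkL : k ≤ L) (η : Torus d (L * M) → A)
    {ω ω' : (Fin d → Fin M) → (Fin d → Fin k) → A} {t : Torus d (L * M)}
    (h : ∀ j, t ∈ torusCube k (blockCorner L j) → ω j = ω' j) :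
    overwriteBlocks η ω t = overwriteBlocks η ω' t := by
  by_cases ht : ∃ p : (Fin d → Fin M) × (Fin d → Fin k), blockSite L p = t
  · obtain ⟨p, rfl⟩ := ht
    rw [overwriteBlocks, overwriteBlocks, (blockSite_injective hkL).extend_apply,
      (blockSite_injective hkL).extend_apply,
      h p.1 (Finset.mem_image_of_mem _ (Finset.mem_univ p.2))]
  · rw [overwriteBlocks, overwriteBlocks, Function.extend_apply' _ _ _ ht,
      Function.extend_apply' _ _ _ ht]

lemma overwriteBlocks_update_eq_of_notMem (hkL : k ≤ L) (η : Torus d (L * M) → A)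
    (ω : (Fin d → Fin M) → (Fin d → Fin k) → A) {i : Fin d → Fin M} (u v : (Fin d → Fin k) → A)
    {t : Torus d (L * M)} (ht : t ∉ torusCube k (blockCorner L i)) :
    overwriteBlocks η (Function.update ω i u) t = overwriteBlocks η (Function.update ω i v) t :=
  overwriteBlocks_congr hkL η fun j hj => by
    have hji : j ≠ i := by
      rintro rfl
      exact ht hj
    rw [Function.update_of_ne hji, Function.update_of_ne hji]

lemma eq_of_mem_torusCube {r : ℕ} (hL : k + 2 * r ≤ L) {j j' : Fin d → Fin M}
    {t : Torus d (L * M)} (ht : t ∈ torusCube k (blockCorner L j)) {m : Fin d → ℤ}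
    (hm : ∀ i, |m i| ≤ 2 * r) (h : t + toTorus (L * M) m ∈ torusCube k (blockCorner L j')) :
    j = j' := by
  obtain ⟨n, -, rfl⟩ := Finset.mem_image.1 ht
  obtain ⟨n', -, hn'⟩ := Finset.mem_image.1 h
  rw [add_assoc, ← map_add] at hn'
  refine (blockCorner_add_inj (fun i => ?_) hn'.symm).1
  have := abs_le.1 (hm i)
  have := abs_lt.1 (abs_siteOf_sub_siteOf_lt n n' i)
  rw [Pi.add_apply, abs_lt]
  omega

end Blocks

section StrictConvexity

variable {d : ℕ} {A : Type} [TopologicalSpace A] [DiscreteTopology A]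
  {Φ : Finset (Fin d → ℤ) → Cfg d A → ℝ}

section

variable [Finite A]

lemma IsAbsSummable.abs_overwriteBlocks_cross_le (hΦ : IsAbsSummable Φ) {L M k r : ℕ}
    [NeZero (L * M)] (hL : k + 2 * r ≤ L) (η : Torus d (L * M) → A)
    (a ω : (Fin d → Fin M) → (Fin d → Fin k) → A) (i : Fin d → Fin M) (u : (Fin d → Fin k) → A) :
    |(torusEnergy (potentialOfInteraction Φ) (overwriteBlocks η (Function.update ω i u)) -
        torusEnergy (potentialOfInteraction Φ) (overwriteBlocks η (Function.update ω i (a i)))) -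
      (torusEnergy (potentialOfInteraction Φ) (overwriteBlocks η (Function.update a i u)) -
        torusEnergy (potentialOfInteraction Φ) (overwriteBlocks η a))| ≤
      4 * (k : ℝ) ^ d * tailNorm Φ r := by
  have hkL : k ≤ L := by omega
  let S := torusCube k (blockCorner (d := d) (M := M) L i)
  let S' := (Finset.univ.erase i).biUnion fun j => torusCube k (blockCorner (d := d) L j)
  have hsep : ∀ t ∈ S, ∀ m : Fin d → ℤ, (∀ i, |m i| ≤ 2 * r) → t + toTorus (L * M) m ∉ S' :=
    fun t ht m hm hmem => by
      obtain ⟨j, hj, hjt⟩ := Finset.mem_biUnion.1 hmem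
      exact (Finset.mem_erase.1 hj).1 (eq_of_mem_torusCube hL ht hm hjt).symm
  have hin : ∀ v : (Fin d → Fin k) → A, ∀ t ∉ S',
      overwriteBlocks η (Function.update ω i v) t = overwriteBlocks η (Function.update a i v) t :=
    fun v t ht => overwriteBlocks_congr hkL η fun j hj => by
      have hji : j = i := by_contra fun h =>
        ht (Finset.mem_biUnion.2 ⟨j, Finset.mem_erase.2 ⟨h, Finset.mem_univ j⟩, hj⟩)
      rw [hji, Function.update_self, Function.update_self]
  have hcross := hΦ.abs_torusEnergy_cross_le hsep
    (fun t => overwriteBlocks_update_eq_of_notMem hkL η ω u (a i))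
    (fun t => overwriteBlocks_update_eq_of_notMem hkL η a u (a i)) (hin u) (hin (a i))
  rw [Function.update_eq_self] at hcross
  have hcard : (S.card : ℝ) ≤ (k : ℝ) ^ d := by exact_mod_cast card_torusCube_le k _
  have htail : 0 ≤ tailNorm Φ r := tailNorm_nonneg r
  exact hcross.trans (by gcongr)

variable [MeasurableSpace A] [BorelSpace A]

/-- The two patterns realize box sums above the average for `ν₁` and below the average for `ν₂`;
everything outside of the box only contributes to lower order. -/
lemma IsAbsSummable.exists_pattern_energy_gap (hΦ : IsAbsSummable Φ) {ν₁ ν₂ : Measure (Cfg d A)}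
    [IsProbabilityMeasure ν₁] [IsProbabilityMeasure ν₂] (h₁ : Invariant ν₁) (h₂ : Invariant ν₂)
    (hlt : ∫ x, potentialOfInteraction Φ x ∂ν₂ < ∫ x, potentialOfInteraction Φ x ∂ν₁) :
    ∃ k δ, 0 < k ∧ 0 < δ ∧ ∃ u v : (Fin d → Fin k) → A, ∀ (N : ℕ) [NeZero N], k ≤ N →
      ∀ (t : Torus d N) (w w' : Torus d N → A), (∀ s ∉ torusCube k t, w s = w' s) →
      pattern k (unroll w t) = u → pattern k (unroll w' t) = v →
      δ ≤ |torusEnergy (potentialOfInteraction Φ) w -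
        torusEnergy (potentialOfInteraction Φ) w'| := by
  let φ := potentialOfInteraction Φ
  have hφ : Continuous φ := hΦ.continuous_potential
  let γ := ∫ x, φ x ∂ν₁ - ∫ x, φ x ∂ν₂
  have hγ : 0 < γ := sub_pos.2 hlt
  have hγ4 : 0 < γ / 4 := div_pos hγ four_pos
  obtain ⟨k, ⟨houtside, hclose⟩, hk⟩ := ((hΦ.eventually_abs_torusEnergy_sub_boxSum_le hγ4).and
    (eventually_abs_boxSum_sub_le hφ hγ4)).and (eventually_gt_atTop 0) |>.exists
  obtain ⟨x, hx⟩ := exists_integral_le (integrable_of_continuous (continuous_boxSum hφ k) ν₁)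
  obtain ⟨y, hy⟩ := exists_le_integral (integrable_of_continuous (continuous_boxSum hφ k) ν₂)
  rw [integral_boxSum h₁ hφ] at hx
  rw [integral_boxSum h₂ hφ] at hy
  refine ⟨k, γ / 4 * (k : ℝ) ^ d, hk, by positivity, pattern k x, pattern k y, ?_⟩
  intro N _ hkN t w w' hw hwx hwy
  have hgap : (k : ℝ) ^ d * γ ≤ boxSum φ k x - boxSum φ k y :=
    (mul_sub _ _ _).trans_le (sub_le_sub hx hy)
  have hboundary := abs_le.1 (houtside N hkN t w w' hw)
  have hboxx := abs_le.1 (hclose _ _ hwx)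
  have hboxy := abs_le.1 (hclose _ _ hwy)
  refine le_trans ?_ (le_abs_self _)
  linarith [hgap, hboundary.1, hboxx.1, hboxy.2]

end

/-- Blocks at distance much larger than their side interact weakly compared to the gap of each. -/
lemma IsAbsSummable.exists_mul_pow_le_convexityGap [Fintype A] [Nonempty A] [MeasurableSpace A]
    [BorelSpace A] (hΦ : IsAbsSummable Φ)
    {ν₁ ν₂ : Measure (Cfg d A)} [IsProbabilityMeasure ν₁] [IsProbabilityMeasure ν₂]
    (h₁ : Invariant ν₁) (h₂ : Invariant ν₂)
    (hlt : ∫ x, potentialOfInteraction Φ x ∂ν₂ < ∫ x, potentialOfInteraction Φ x ∂ν₁)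
    (b : ℝ) {s : ℝ} (hs : s ≠ 0) :
    ∃ L c, 0 < L ∧ 0 < c ∧ ∀ (M : ℕ) [NeZero (L * M)],
      (M : ℝ) ^ d * c ≤
        convexityGap (torusEnergy (d := d) (N := L * M) (potentialOfInteraction Φ)) b s := by
  obtain ⟨k, δ, hk, hδ, u, v, hgap⟩ := hΦ.exists_pattern_energy_gap h₁ h₂ hlt
  obtain ⟨c, hc, hconvex⟩ := exists_pos_le_convexityGap ((Fin d → Fin k) → A) b
    (2 * (k : ℝ) ^ d * ∑' Λ, termNorm Φ Λ) hδ hs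
  let K := |b - s| + |b + s| + 2 * |b|
  have htail : Tendsto (fun r => K * (4 * (k : ℝ) ^ d * tailNorm Φ r)) atTop (𝓝 0) := by
    simpa using (hΦ.tendsto_tailNorm.const_mul (4 * (k : ℝ) ^ d)).const_mul K
  obtain ⟨r, hr⟩ := (htail.eventually_le_const (half_pos hc)).exists
  refine ⟨k + 2 * r, c / 2, by omega, half_pos hc, fun M _ => ?_⟩
  have hkL : k ≤ k + 2 * r := by omega
  have hM : 0 < M := Nat.pos_of_ne_zero (right_ne_zero_of_mul (NeZero.ne ((k + 2 * r) * M)))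
  refine le_convexityGap_of_forall_extend (blockSite_injective (M := M) hkL) fun η => ?_
  rw [← convexityGap_comp_equiv (Equiv.curry _ _ _).symm]
  let a : (Fin d → Fin M) → (Fin d → Fin k) → A := fun _ => u
  refine le_trans ?_ (mul_le_convexityGap_of_nearProduct
    (fun ω => torusEnergy (potentialOfInteraction Φ) (overwriteBlocks η ω)) a
    (fun i u ω => hΦ.abs_overwriteBlocks_cross_le le_rfl η a ω i u) (c := c) fun i => ?_)
  · rw [Fintype.card_fun, Fintype.card_fin, Fintype.card_fin, Nat.cast_pow]
    gcongr
    linarith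
  · refine hconvex _ u v (fun u₁ u₂ => ?_) ?_
    · refine (hΦ.abs_torusEnergy_sub_le fun t =>
        overwriteBlocks_update_eq_of_notMem hkL η a u₁ u₂).trans ?_
      have hcard : ((torusCube k (blockCorner (k + 2 * r) i)).card : ℝ) ≤ (k : ℝ) ^ d := by
        exact_mod_cast card_torusCube_le k _
      have hnorm : 0 ≤ ∑' Λ, termNorm Φ Λ := tsum_nonneg termNorm_nonneg
      gcongr
    · refine hgap _ (hkL.trans (Nat.le_mul_of_pos_right _ hM)) (blockCorner _ i) _ _
        (fun t => overwriteBlocks_update_eq_of_notMem hkL η a u v) ?_ ?_ <;>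
      rw [pattern_unroll_overwriteBlocks hkL, Function.update_self]

end StrictConvexity

section EquilibriumStates

variable {d : ℕ} {A : Type} [Fintype A] [Nonempty A] [TopologicalSpace A] [DiscreteTopology A]
  [MeasurableSpace A] [BorelSpace A]

lemma IsAbsSummable.two_mul_pressure_lt {Φ : Finset (Fin d → ℤ) → Cfg d A → ℝ}
    (hΦ : IsAbsSummable Φ) {ν₁ ν₂ : Measure (Cfg d A)} [IsProbabilityMeasure ν₁]
    [IsProbabilityMeasure ν₂] (h₁ : Invariant ν₁) (h₂ : Invariant ν₂)
    (hlt : ∫ x, potentialOfInteraction Φ x ∂ν₂ < ∫ x, potentialOfInteraction Φ x ∂ν₁)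
    (b : ℝ) {s : ℝ} (hs : s ≠ 0) :
    2 * pressure (potentialOfInteraction Φ) b <
      pressure (potentialOfInteraction Φ) (b - s) +
        pressure (potentialOfInteraction Φ) (b + s) := by
  let φ := potentialOfInteraction Φ
  obtain ⟨L, c, hL, hc, hgap⟩ := hΦ.exists_mul_pow_le_convexityGap h₁ h₂ hlt b hs
  have hlim := tendsto_torusPressure_factorial hΦ.continuous_potential
  have hscaled : ∀ (N : ℕ) [NeZero N], L ∣ N →
      (N : ℝ) ^ d * (c / (L : ℝ) ^ d) ≤ convexityGap (torusEnergy (N := N) φ) b s := by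
    rintro N _ ⟨M, rfl⟩
    refine le_of_eq_of_le ?_ (hgap M)
    rw [Nat.cast_mul, mul_pow]
    field_simp
  have hfinite : ∀ᶠ k : ℕ in atTop, c / (L : ℝ) ^ d ≤ torusPressure k.factorial φ (b - s) +
      torusPressure k.factorial φ (b + s) - 2 * torusPressure k.factorial φ b := by
    filter_upwards [eventually_ge_atTop L] with k hk
    have hN : (0 : ℝ) < k.factorial := Nat.cast_pos.2 k.factorial_pos
    have hk := hscaled k.factorial (Nat.dvd_factorial hL hk)
    rw [← le_inv_mul_iff₀ (pow_pos hN d)] at hk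
    exact hk.trans_eq (by simp only [torusPressure, convexityGap]; ring)
  have hpressure := ge_of_tendsto
    (((hlim (b - s)).add (hlim (b + s))).sub ((hlim b).const_mul 2)) hfinite
  have : 0 < c / (L : ℝ) ^ d := by positivity
  linarith

variable {f : Cfg d A → ℝ}

lemma disjoint_ES_of_two_mul_pressure_lt (hf : Continuous f)
    (hlt : ∀ b s : ℝ, s ≠ 0 → 2 * pressure f b < pressure f (b - s) + pressure f (b + s))
    {β β' : ℝ} (hne : β ≠ β') : Disjoint (ES f β) (ES f β') := by
  rw [Set.disjoint_left]
  rintro μ ⟨_, hinv, hβ⟩ ⟨-, -, hβ'⟩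
  have hmid := entropy_add_integral_le_pressure hf ((β + β') / 2) hinv
  have hconvex := hlt ((β + β') / 2) ((β' - β) / 2)
    (div_ne_zero (sub_ne_zero.2 hne.symm) two_ne_zero)
  rw [show (β + β') / 2 - (β' - β) / 2 = β by ring,
    show (β + β') / 2 + (β' - β) / 2 = β' by ring, ← hβ, ← hβ'] at hconvex
  linarith

lemma ES_subset_of_integral_eq (hf : Continuous f)
    (hconst : ∀ μ ν : Measure (Cfg d A), IsProbabilityMeasure μ → IsProbabilityMeasure ν →
      Invariant μ → Invariant ν → ∫ x, f x ∂μ = ∫ x, f x ∂ν) (β β' : ℝ) :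
    ES f β ⊆ ES f β' := by
  rintro μ ⟨hμprob, hμ, hβ⟩
  obtain ⟨ν, hνprob, hν, hβ'⟩ := ES_nonempty hf β'
  have hle := entropy_add_integral_le_pressure hf β hν
  refine ⟨hμprob, hμ, (entropy_add_integral_le_pressure hf β' hμ).antisymm ?_⟩
  rw [hconst μ ν hμprob hνprob hμ hν] at hβ ⊢
  linarith

lemma not_freezingPT_of_disjoint (hf : Continuous f) {βc : ℝ}
    (h : ∀ β β', β ≠ β' → Disjoint (ES f β) (ES f β')) : ¬FreezingPT f βc := fun hfreeze => by
  have hdisjoint := h (βc + 1) (βc + 2) (by linarith [·])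
  rw [hfreeze.1 (βc + 1) (βc + 2) (by linarith) (by linarith), disjoint_self] at hdisjoint
  exact (ES_nonempty hf _).ne_empty hdisjoint

lemma IsAbsSummable.not_freezingPT {Φ : Finset (Fin d → ℤ) → Cfg d A → ℝ}
    (hΦ : IsAbsSummable Φ) (βc : ℝ) : ¬FreezingPT (potentialOfInteraction Φ) βc := by
  have hφ := hΦ.continuous_potential
  by_cases hlt : ∃ ν₁ ν₂ : Measure (Cfg d A), IsProbabilityMeasure ν₁ ∧ IsProbabilityMeasure ν₂ ∧
      Invariant ν₁ ∧ Invariant ν₂ ∧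
      ∫ x, potentialOfInteraction Φ x ∂ν₂ < ∫ x, potentialOfInteraction Φ x ∂ν₁
  · obtain ⟨ν₁, ν₂, _, _, h₁, h₂, hlt⟩ := hlt
    exact not_freezingPT_of_disjoint hφ fun β β' => disjoint_ES_of_two_mul_pressure_lt hφ
      fun b s => hΦ.two_mul_pressure_lt h₁ h₂ hlt b
  · have hsub := ES_subset_of_integral_eq hφ fun μ ν hμ hν hμinv hνinv => le_antisymm
      (not_lt.1 fun h => hlt ⟨μ, ν, hμ, hν, hμinv, hνinv, h⟩)
      (not_lt.1 fun h => hlt ⟨ν, μ, hν, hμ, hνinv, hμinv, h⟩)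
    exact fun hfreeze => hfreeze.2 (βc - 1) (βc + 1) (by linarith) (by linarith)
      ((hsub _ _).antisymm (hsub _ _))

end EquilibriumStates

theorem statement2_general {d : ℕ} {A : Type} [Fintype A] [Nonempty A] [TopologicalSpace A]
    [DiscreteTopology A] [MeasurableSpace A] [BorelSpace A]
    {Φ : Finset (Fin d → ℤ) → Cfg d A → ℝ} (hΦ : IsAbsSummable Φ) :
    Continuous (potentialOfInteraction Φ) ∧
      ¬ ∃ βc : ℝ, FreezingPT (potentialOfInteraction Φ) βc :=
  ⟨hΦ.continuous_potential, fun ⟨βc, h⟩ => hΦ.not_freezingPT βc h⟩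

/-- **Theorem B'.** Let `Φ` be a shift-invariant interaction (each `Φ_Λ`
continuous and depending only on coordinates in `Λ`, with `Φ_{Λ+n}(x) = Φ_Λ(σ^n x)`), which
is absolutely summable: `Σ_{Λ ∋ 0} ‖Φ_Λ‖_∞ < ∞`. Then `φ = Σ_{Λ ∋ 0} Φ_Λ / |Λ|` is continuous
and has no freezing phase transition. -/
theorem statement2 (d : ℕ) (hd : 1 ≤ d) (A : Type) [Fintype A] [Nonempty A]
    [TopologicalSpace A] [DiscreteTopology A] [MeasurableSpace A] [BorelSpace A]
    (Φ : Finset (Fin d → ℤ) → Cfg d A → ℝ)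
    (hcont : ∀ Λ, Continuous (Φ Λ))
    (hloc : ∀ (Λ : Finset (Fin d → ℤ)) (x y : Cfg d A),
      (∀ m ∈ Λ, x m = y m) → Φ Λ x = Φ Λ y)
    (hcov : ∀ (Λ : Finset (Fin d → ℤ)) (n : Fin d → ℤ) (x : Cfg d A),
      Φ (Λ.image (fun k => k + n)) x = Φ Λ (shift n x))
    (hsum : Summable fun Λ : {Λ : Finset (Fin d → ℤ) // (0 : Fin d → ℤ) ∈ Λ} =>
      ⨆ x : Cfg d A, |Φ Λ.1 x|) :
    Continuous (potentialOfInteraction Φ) ∧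
      ¬ ∃ βc : ℝ, FreezingPT (potentialOfInteraction Φ) βc :=
  statement2_general ⟨fun Λ => hloc Λ, hsum⟩

end Freezing
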